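/- arXiv:2010.15888 — 4 statements merged into one kernel-verified Lean document; each statement's English description precedes it below -/
import Mathlib

section
/- Let n ≥ 2, let G be an almost controllable graph on Fin n, and let H be a graph on Fin n that is generalized cospectral with G (so H is also almost controllable and ξ(H), W₀(H), W₁(H) are defined, with W₀(H) invertible). Then the equation Qᵀ·A(G)·Q = A(H), for Q ranging over real regular orthogonal n×n matrices, has exactly two solutions, namely Q₀ = W₀(G)·W₀(H)⁻¹ and Q₁ = W₁(G)·W₀(H)⁻¹; in particular Q₀ ≠ Q₁ and both solutions have all entries rational. -/
/-!
Write `N = n + 2` for the number of vertices, `e` for the all-ones vector, `V = [e, Ae, …, Aⁿe]`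
and `ξ` for the vector of last-column cofactors of the walk matrix.

Generalized cospectrality gives `eᵀ Aᵏ e = eᵀ Bᵏ e` for all `k` (`sum_pow_eq`), by the matrix
determinant lemma applied to `1 - X A + X e eᵀ` over power series. Hence the walk matrices of `A`
and `B` have the same Gram matrix, and in particular the same rank.

Expanding along the last column, `det [V, u] = ξ ⬝ᵥ u` for every `u` (`det_bordered`). Therefore
`ξ` is orthogonal to every walk vector; it is nonzero because the columns of `V` are independent;
and `ξ ⬝ᵥ ξ = det (Vᵀ V)`, so `ξ(A)` and `ξ(B)` have the same length.

It follows that a solution `Q`, which satisfies `Q Bᵏ e = Aᵏ e`, must send `ξ(B)` to a vector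
orthogonal to `V(A)` of the same length as `ξ(A)`, i.e. to `± ξ(A)`. Conversely, a map sending
`V(B)` to `V(A)` and `ξ(B)` to `± ξ(A)` preserves the Gram matrix of a basis, so it is orthogonal,
and `D = Qᵀ A Q - B` is a symmetric matrix killing `V(B)`. Its rows are multiples of `ξ(B)`, so
`D` is a multiple of `ξ(B) ξ(B)ᵀ`; adjacency matrices have trace zero, so `D = 0`
(`solution_iff`).
-/


open Matrix

namespace AlmostControllableGraphs

variable {n : ℕ}

/-- The all-ones vector. -/
def eVec (m : ℕ) : Fin m → ℤ := fun _ => 1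

/-- The walk matrix `W(G) = [e, Ae, A²e, …, A^{n-1}e]` (columns indexed by `Fin (n+2)`). -/
def walkMatrix (A : Matrix (Fin (n + 2)) (Fin (n + 2)) ℤ) :
    Matrix (Fin (n + 2)) (Fin (n + 2)) ℤ :=
  Matrix.of fun i j => ((A ^ (j : ℕ)) *ᵥ eVec (n + 2)) i

/-- `G` is almost controllable if its walk matrix has rank `n - 1` over `ℚ`. -/
def IsAlmostControllable (A : Matrix (Fin (n + 2)) (Fin (n + 2)) ℤ) : Prop :=
  ((walkMatrix A).map ((↑) : ℤ → ℚ)).rank = n + 1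

/-- The matrix `V = [e, Ae, …, A^{n-2}e]`, the first `n - 1` columns of the walk matrix. -/
def Vmat (A : Matrix (Fin (n + 2)) (Fin (n + 2)) ℤ) :
    Matrix (Fin (n + 2)) (Fin (n + 1)) ℤ :=
  Matrix.of fun i j => walkMatrix A i j.castSucc

/-- The matrix obtained from `V` by deleting row `i`. -/
def Xmat (A : Matrix (Fin (n + 2)) (Fin (n + 2)) ℤ) (i : Fin (n + 2)) :
    Matrix (Fin (n + 1)) (Fin (n + 1)) ℤ :=
  Matrix.of fun r c => Vmat A (i.succAbove r) c

/-- The `(i, n)`-cofactor of the walk matrix: `(−1)^{n+i}` times the determinant of the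
matrix obtained by deleting row `i` and the last column from `W(G)`.
(In 0-based indexing the sign is `(−1)^{i + (n-1)}`.) -/
def cofactorLast (A : Matrix (Fin (n + 2)) (Fin (n + 2)) ℤ) (i : Fin (n + 2)) : ℤ :=
  (-1 : ℤ) ^ ((i : ℕ) + (n + 1)) * (Xmat A i).det

/-- The vector `ξ(G)` of last-column cofactors of the walk matrix. -/
def xiVec (A : Matrix (Fin (n + 2)) (Fin (n + 2)) ℤ) : Fin (n + 2) → ℤ :=
  fun i => cofactorLast A i

/-- The rational scalar `2^{1 - ⌊n/2⌋}`. -/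
def twoPow (n : ℕ) : ℚ := (2 : ℚ) ^ ((1 : ℤ) - (((n + 2) / 2 : ℕ) : ℤ))

/-- The matrix `W_δ(G) = [e, Ae, …, A^{n-2}e, (−1)^δ·2^{1-⌊n/2⌋}·ξ(G)]`. -/
def Wdelta (A : Matrix (Fin (n + 2)) (Fin (n + 2)) ℤ) (δ : ℕ) :
    Matrix (Fin (n + 2)) (Fin (n + 2)) ℚ :=
  Matrix.of fun i j =>
    if (j : ℕ) = n + 1 then (-1 : ℚ) ^ δ * twoPow n * (xiVec A i : ℚ)
    else ((walkMatrix A i j : ℤ) : ℚ)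

/-- A matrix is regular orthogonal if it is orthogonal and has all row sums equal to 1. -/
def IsRegularOrthogonal {K : Type*} [Field K] {m : ℕ} (Q : Matrix (Fin m) (Fin m) K) : Prop :=
  Qᵀ * Q = 1 ∧ Q *ᵥ (fun _ => (1 : K)) = fun _ => 1

/-- Adjacency matrix of the complement graph. -/
def complMat (A : Matrix (Fin (n + 2)) (Fin (n + 2)) ℤ) :
    Matrix (Fin (n + 2)) (Fin (n + 2)) ℤ :=
  Matrix.of fun i j => if i = j then 0 else 1 - A i j

/-- Two graphs are generalized cospectral if they are cospectral and so are their complements. -/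
def GenCospectral (A B : Matrix (Fin (n + 2)) (Fin (n + 2)) ℤ) : Prop :=
  A.charpoly = B.charpoly ∧ (complMat A).charpoly = (complMat B).charpoly

/-- `τ` and `τ'` are twins: the transposition swapping them is an automorphism. -/
def IsTwinPair (A : Matrix (Fin (n + 2)) (Fin (n + 2)) ℤ) (τ τ' : Fin (n + 2)) : Prop :=
  ∀ i j, A (Equiv.swap τ τ' i) (Equiv.swap τ τ' j) = A i j

/-- `λ₁(G) = −1` if the twins are adjacent and `0` otherwise; for a 0-1 matrix this
is `−A τ τ'`. -/
def lam1 (A : Matrix (Fin (n + 2)) (Fin (n + 2)) ℤ) (τ τ' : Fin (n + 2)) : ℤ :=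
  -(A τ τ')

/-- The vector `α(G)` with entry `−1` at `τ`, `1` at `τ'`, and `0` elsewhere. -/
def alphaVec (τ τ' : Fin (n + 2)) : Fin (n + 2) → ℤ :=
  fun i => if i = τ then -1 else if i = τ' then 1 else 0

/-- The reduction of `α(G)` modulo `p`. -/
def alphaVecMod (p : ℕ) (τ τ' : Fin (n + 2)) : Fin (n + 2) → ZMod p :=
  fun i => ((alphaVec τ τ' i : ℤ) : ZMod p)

/-- The matrix `Ŵ(G) = [e, Ae, …, A^{n-2}e, α(G)]`. -/
def hatW (A : Matrix (Fin (n + 2)) (Fin (n + 2)) ℤ) (τ τ' : Fin (n + 2)) :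
    Matrix (Fin (n + 2)) (Fin (n + 2)) ℤ :=
  Matrix.of fun i j => if (j : ℕ) = n + 1 then alphaVec τ τ' i else walkMatrix A i j

/-- The level of a rational matrix: the smallest positive integer `ℓ` such that `ℓQ` is
an integer matrix. -/
noncomputable def level {m : ℕ} (Q : Matrix (Fin m) (Fin m) ℚ) : ℕ :=
  sInf {k : ℕ | 0 < k ∧ ∀ i j, ((k : ℚ) * Q i j).den = 1}

/-- A permutation matrix. -/
def IsPermMatrix {m : ℕ} (Q : Matrix (Fin m) (Fin m) ℚ) : Prop :=
  ∃ σ : Equiv.Perm (Fin m), ∀ i j, Q i j = if σ i = j then 1 else 0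

/-- `G` is determined by its generalized spectrum: every graph generalized cospectral with
`G` is isomorphic to `G`. -/
def IsDGS (A : Matrix (Fin (n + 2)) (Fin (n + 2)) ℤ) : Prop :=
  ∀ B : Matrix (Fin (n + 2)) (Fin (n + 2)) ℤ, B.IsAdjMatrix → GenCospectral A B →
    ∃ σ : Equiv.Perm (Fin (n + 2)), ∀ i j, B i j = A (σ i) (σ j)


/-! ### Walk counts from the generalized spectrum -/

/-- With `J` the all-ones matrix, `A - J = -(1 + Ā)` where `Ā` is the complement, so the spectrum
of the complement determines that of `A - J`. -/
theorem charpoly_sub_ones_of_compl {A B : Matrix (Fin (n + 2)) (Fin (n + 2)) ℤ}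
    (hA : A.IsAdjMatrix) (hB : B.IsAdjMatrix)
    (h : (complMat A).charpoly = (complMat B).charpoly) :
    (A - Matrix.of fun _ _ => 1).charpoly = (B - Matrix.of fun _ _ => 1).charpoly := by
  have key : ∀ C : Matrix (Fin (n + 2)) (Fin (n + 2)) ℤ, C.IsAdjMatrix → ∀ t : ℤ,
      (C - Matrix.of fun _ _ => 1).charpoly.eval t =
        (-1) ^ (n + 2) * (complMat C).charpoly.eval (-t - 1) := by
    intro C hC t
    have : Matrix.scalar (Fin (n + 2)) t - (C - Matrix.of fun _ _ => 1) =
        -(Matrix.scalar (Fin (n + 2)) (-t - 1) - complMat C) := by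
      ext i j
      by_cases hij : i = j
      · subst hij
        simp [complMat, hC.apply_diag]
        ring
      · simp [complMat, hij]
        ring
    rw [Matrix.eval_charpoly, Matrix.eval_charpoly, this, Matrix.det_neg, Fintype.card_fin]
  refine Polynomial.funext fun t => ?_
  rw [key A hA, key B hB, h]

/-- The matrix determinant lemma for `1 - X (A - J) = (1 - X A) + X e eᵀ` over power series:
`det (1 - X (A - J)) = det (1 - X A) (1 + X ∑ₖ (eᵀ Aᵏ e) Xᵏ)`. -/
theorem charpolyRev_sub_ones (A : Matrix (Fin (n + 2)) (Fin (n + 2)) ℤ) :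
    ((A - Matrix.of fun _ _ => 1).charpolyRev : PowerSeries ℤ) =
      (A.charpolyRev : PowerSeries ℤ) *
        (1 + PowerSeries.X * PowerSeries.mk fun k => ∑ i, ∑ j, (A ^ k) i j) := by
  let ι : Polynomial ℤ →+* PowerSeries ℤ := Polynomial.coeToPowerSeries.ringHom
  let M : Matrix (Fin (n + 2)) (Fin (n + 2)) (PowerSeries ℤ) :=
    1 - (PowerSeries.X : PowerSeries ℤ) • A.map (PowerSeries.C (R := ℤ))
  let S : Matrix (Fin (n + 2)) (Fin (n + 2)) (PowerSeries ℤ) :=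
    Matrix.of fun i j => PowerSeries.mk fun k => (A ^ k) i j
  -- `S` is the Neumann series of `1 - X A`.
  have hMS : M * S = 1 := by
    have hS : S = 1 + (PowerSeries.X : PowerSeries ℤ) • (A.map (PowerSeries.C (R := ℤ)) * S) := by
      ext i j k
      cases k with
      | zero =>
        by_cases hij : i = j <;> simp [S, hij]
      | succ k =>
        have h1 : (PowerSeries.coeff (k + 1)) ((1 : Matrix (Fin (n + 2)) (Fin (n + 2))
            (PowerSeries ℤ)) i j) = 0 := by
          simp [Matrix.one_apply, apply_ite, PowerSeries.coeff_one]
        simp [S, Matrix.mul_apply, pow_succ', PowerSeries.coeff_succ_X_mul, h1, -eq_intCast]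
    have : M * S = S - (PowerSeries.X : PowerSeries ℤ) • (A.map (PowerSeries.C (R := ℤ)) * S) := by
      simp only [M, sub_mul, one_mul, smul_mul_assoc]
    rw [this]
    nth_rewrite 1 [hS]
    simp
  have hMu : IsUnit M.det := Matrix.isUnit_det_of_right_inverse hMS
  have hMinv : M⁻¹ = S := Matrix.inv_eq_right_inv hMS
  have h1 : (A.charpolyRev : PowerSeries ℤ) = M.det := by
    change ι (1 - (Polynomial.X : Polynomial ℤ) • A.map Polynomial.C).det = _
    rw [RingHom.map_det]
    congr 1
    ext1 i j
    by_cases hij : i = j <;> simp [ι, M, hij, -eq_intCast] <;> ring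
  have h2 : ((A - Matrix.of fun _ _ => 1).charpolyRev : PowerSeries ℤ) =
      (M + Matrix.replicateCol Unit (fun _ : Fin (n + 2) => (PowerSeries.X : PowerSeries ℤ)) *
        Matrix.replicateRow Unit (fun _ : Fin (n + 2) => (1 : PowerSeries ℤ))).det := by
    change ι (1 - (Polynomial.X : Polynomial ℤ) •
      (A - Matrix.of fun _ _ => 1).map Polynomial.C).det = _
    rw [RingHom.map_det]
    congr 1
    ext1 i j
    by_cases hij : i = j <;> simp [ι, M, hij, Matrix.mul_apply, -eq_intCast] <;> ring
  rw [h1, h2, Matrix.det_add_replicateCol_mul_replicateRow hMu, hMinv]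
  congr 1
  have hsum : (PowerSeries.mk fun k => ∑ i, ∑ j, (A ^ k) i j) = ∑ i, ∑ j, S i j := by
    ext k
    simp [S]
  rw [hsum, Matrix.det_unique]
  simp only [Matrix.add_apply, Matrix.one_apply_eq, Matrix.mul_apply, Matrix.replicateRow_apply,
    Matrix.replicateCol_apply, one_mul]
  rw [← Finset.sum_mul, Finset.sum_comm, mul_comm]

/-- Generalized cospectral graphs have the same number of walks of each length. -/
theorem sum_pow_eq {A B : Matrix (Fin (n + 2)) (Fin (n + 2)) ℤ}
    (hA : A.IsAdjMatrix) (hB : B.IsAdjMatrix) (hgc : GenCospectral A B) (k : ℕ) :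
    ∑ i, ∑ j, (A ^ k) i j = ∑ i, ∑ j, (B ^ k) i j := by
  have h1 : A.charpolyRev = B.charpolyRev := by
    rw [← Matrix.reverse_charpoly, ← Matrix.reverse_charpoly, hgc.1]
  have h2 : (A - Matrix.of fun _ _ => 1).charpolyRev = (B - Matrix.of fun _ _ => 1).charpolyRev := by
    rw [← Matrix.reverse_charpoly, ← Matrix.reverse_charpoly,
      charpoly_sub_ones_of_compl hA hB hgc.2]
  have hne : (A.charpolyRev : PowerSeries ℤ) ≠ 0 := by
    intro h
    have h0 : A.charpolyRev = 0 := by exact_mod_cast h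
    have := Matrix.eval_charpolyRev (M := A)
    rw [h0] at this
    simp at this
  have h3 := charpolyRev_sub_ones A
  rw [h2, charpolyRev_sub_ones B, h1] at h3
  rw [h1] at hne
  have h4 := mul_left_cancel₀ hne h3
  have h5 := congrArg (PowerSeries.coeff (k + 1)) (add_left_cancel h4)
  simpa [PowerSeries.coeff_succ_X_mul] using h5.symm

/-! ### Walk vectors and the cofactor vector -/

/-- The walk vector `A^k e`, the `k`-th column of the walk matrix. -/
def walkVec (A : Matrix (Fin (n + 2)) (Fin (n + 2)) ℤ) (k : ℕ) : Fin (n + 2) → ℤ :=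
  (A ^ k) *ᵥ eVec (n + 2)

theorem walkVec_succ (A : Matrix (Fin (n + 2)) (Fin (n + 2)) ℤ) (k : ℕ) :
    walkVec A (k + 1) = A *ᵥ walkVec A k := by
  rw [walkVec, walkVec, pow_succ', Matrix.mulVec_mulVec]

theorem walkVec_dotProduct {A : Matrix (Fin (n + 2)) (Fin (n + 2)) ℤ} (hA : A.IsAdjMatrix)
    (i j : ℕ) : walkVec A i ⬝ᵥ walkVec A j = ∑ r, ∑ c, (A ^ (i + j)) r c := by
  have hsymm : (A ^ i)ᵀ = A ^ i := by rw [Matrix.transpose_pow, hA.symm.eq]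
  rw [walkVec, walkVec, ← Matrix.vecMul_transpose, hsymm, ← Matrix.dotProduct_mulVec,
    Matrix.mulVec_mulVec, ← pow_add]
  simp [eVec, dotProduct, Matrix.mulVec]

theorem walkVec_dotProduct_eq {A B : Matrix (Fin (n + 2)) (Fin (n + 2)) ℤ}
    (hA : A.IsAdjMatrix) (hB : B.IsAdjMatrix) (hgc : GenCospectral A B) (i j : ℕ) :
    walkVec A i ⬝ᵥ walkVec A j = walkVec B i ⬝ᵥ walkVec B j := by
  rw [walkVec_dotProduct hA, walkVec_dotProduct hB, sum_pow_eq hA hB hgc]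

/-- Almost controllability depends only on the Gram matrix of the walk vectors. -/
theorem isAlmostControllable_of_genCospectral {A B : Matrix (Fin (n + 2)) (Fin (n + 2)) ℤ}
    (hA : A.IsAdjMatrix) (hB : B.IsAdjMatrix) (hgc : GenCospectral A B)
    (hac : IsAlmostControllable A) : IsAlmostControllable B := by
  have h : (walkMatrix A)ᵀ * walkMatrix A = (walkMatrix B)ᵀ * walkMatrix B := by
    ext i j
    exact walkVec_dotProduct_eq hA hB hgc i j
  have hcast := congrArg (fun M => M.map (Int.castRingHom ℚ)) h
  simp only [Matrix.map_mul] at hcast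
  unfold IsAlmostControllable at hac ⊢
  rw [← Matrix.rank_transpose_mul_self] at hac ⊢
  rw [← hac]
  exact congrArg Matrix.rank hcast.symm

/-- The matrix `[e, Ae, …, Aⁿe, u]` (on `n + 2` vertices) with an arbitrary last column `u`,
over an arbitrary commutative ring. -/
def bordered {K : Type*} [CommRing K] (A : Matrix (Fin (n + 2)) (Fin (n + 2)) ℤ)
    (u : Fin (n + 2) → K) : Matrix (Fin (n + 2)) (Fin (n + 2)) K :=
  Matrix.of fun i j => if (j : ℕ) = n + 1 then u i else ((walkVec A j i : ℤ) : K)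

/-- Laplace expansion along the last column. -/
theorem det_bordered {K : Type*} [CommRing K] (A : Matrix (Fin (n + 2)) (Fin (n + 2)) ℤ)
    (u : Fin (n + 2) → K) : (bordered A u).det = (fun i => (xiVec A i : K)) ⬝ᵥ u := by
  rw [Matrix.det_succ_column _ (Fin.last (n + 1)), dotProduct]
  refine Finset.sum_congr rfl fun i _ => ?_
  have : (bordered A u).submatrix i.succAbove (Fin.last (n + 1)).succAbove =
      (Xmat A i).map (Int.castRingHom K) := by
    ext r c
    have hc : (c : ℕ) ≠ n + 1 := c.2.ne
    simp [bordered, Xmat, Vmat, walkMatrix, walkVec, hc]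
  rw [this, ← RingHom.mapMatrix_apply, ← RingHom.map_det]
  simp [bordered, xiVec, cofactorLast]
  ring

/-- For `k ≤ n` the bordered matrix has a repeated column; for `k = n + 1` it is the singular
walk matrix. -/
theorem xiVec_dotProduct_walkVec {A : Matrix (Fin (n + 2)) (Fin (n + 2)) ℤ}
    (hac : IsAlmostControllable A) {k : ℕ} (hk : k ≤ n + 1) :
    xiVec A ⬝ᵥ walkVec A k = 0 := by
  have h := det_bordered (K := ℤ) A (walkVec A k)
  simp only [Int.cast_id] at h
  change _ = xiVec A ⬝ᵥ walkVec A k at h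
  rw [← h]
  rcases hk.lt_or_eq with hk | rfl
  · refine Matrix.det_zero_of_column_eq (i := ⟨k, by omega⟩) (j := Fin.last (n + 1)) ?_ ?_
    · intro h
      have := congrArg Fin.val h
      simp at this
      omega
    · intro i
      simp [bordered, hk.ne]
  · have hW : bordered A (walkVec A (n + 1)) = walkMatrix A := by
      ext i j
      simp only [bordered, Matrix.of_apply, walkMatrix, walkVec, Int.cast_id]
      split_ifs with hj
      · rw [hj]
      · rfl
    rw [hW]
    by_contra hne
    have hu : IsUnit ((walkMatrix A).map (Int.castRingHom ℚ)) := by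
      rw [Matrix.isUnit_iff_isUnit_det, ← RingHom.mapMatrix_apply, ← RingHom.map_det]
      simpa using hne
    have h1 := Matrix.rank_of_isUnit _ hu
    have h2 : ((walkMatrix A).map (Int.castRingHom ℚ)).rank = n + 1 := hac
    rw [h2] at h1
    simp at h1

/-- If `e, Ae, …, Aⁿe` were dependent, then `p(A) e = 0` for some nonzero polynomial `p` of degree
at most `n`; reduction modulo `p` shows that all walk vectors then lie in a space of dimension at
most `n`, whereas the walk matrix has rank `n + 1`. -/
theorem linearIndependent_walkVec {A : Matrix (Fin (n + 2)) (Fin (n + 2)) ℤ}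
    (hac : IsAlmostControllable A) :
    LinearIndependent ℚ (fun (j : Fin (n + 1)) (i : Fin (n + 2)) => (walkVec A j i : ℚ)) := by
  let A' : Matrix (Fin (n + 2)) (Fin (n + 2)) ℚ := A.map (Int.castRingHom ℚ)
  let f : Polynomial ℚ →ₗ[ℚ] (Fin (n + 2) → ℚ) :=
    { toFun := fun p => (Polynomial.aeval A' p) *ᵥ (fun _ => 1)
      map_add' := fun p q => by rw [map_add, Matrix.add_mulVec]
      map_smul' := fun c p => by rw [map_smul, Matrix.smul_mulVec]; rfl }
  have hf : ∀ k, f (Polynomial.X ^ k) = fun i => (walkVec A k i : ℚ) := by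
    intro k
    change (Polynomial.aeval A' (Polynomial.X ^ k)) *ᵥ (fun _ => 1) = _
    rw [map_pow, Polynomial.aeval_X]
    have : A' ^ k = (A ^ k).map (Int.castRingHom ℚ) := by
      simp only [A', ← RingHom.mapMatrix_apply, map_pow]
    rw [this]
    ext i
    simp [walkVec, Matrix.mulVec, dotProduct, eVec]
  have hmul : ∀ p q, f p = 0 → f (p * q) = 0 := by
    intro p q hp
    change (Polynomial.aeval A' (p * q)) *ᵥ (fun _ => 1) = 0
    rw [mul_comm, map_mul, ← Matrix.mulVec_mulVec]
    change _ *ᵥ f p = 0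
    rw [hp, Matrix.mulVec_zero]
  rw [Fintype.linearIndependent_iff]
  by_contra hcon
  push Not at hcon
  obtain ⟨g, hg, j₀, hj₀⟩ := hcon
  let p : Polynomial ℚ := ∑ j : Fin (n + 1), Polynomial.C (g j) * Polynomial.X ^ (j : ℕ)
  have hfp : f p = 0 := by
    rw [← hg]
    simp only [p, map_sum, ← Polynomial.smul_eq_C_mul, map_smul, hf]
  have hpdeg : p.degree < (n + 1 : ℕ) := Polynomial.degree_sum_fin_lt g
  have hp0 : p ≠ 0 := by
    intro h
    have := congrArg (fun q => Polynomial.coeff q j₀) h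
    simp only [p, Polynomial.finsetSum_coeff, Polynomial.coeff_C_mul_X_pow,
      Polynomial.coeff_zero] at this
    rw [Finset.sum_eq_single j₀] at this
    · simp at this
      exact hj₀ this
    · intro b _ hb
      rw [if_neg]
      intro h
      exact hb (Fin.ext h.symm)
    · simp
  have hsub : Submodule.span ℚ (Set.range ((walkMatrix A).map (Int.castRingHom ℚ)).col) ≤
      (Polynomial.degreeLT ℚ n).map f := by
    rw [Submodule.span_le]
    rintro _ ⟨j, rfl⟩
    refine ⟨Polynomial.X ^ (j : ℕ) % p, ?_, ?_⟩
    · rw [SetLike.mem_coe, Polynomial.mem_degreeLT]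
      refine lt_of_lt_of_le (Polynomial.degree_mod_lt (Polynomial.X ^ (j : ℕ)) hp0) ?_
      rw [Polynomial.degree_eq_natDegree hp0, Nat.cast_lt] at hpdeg
      rw [Polynomial.degree_eq_natDegree hp0, Nat.cast_le]
      omega
    · have h := congrArg f (EuclideanDomain.mod_add_div (Polynomial.X ^ (j : ℕ)) p)
      rw [map_add, hmul _ _ hfp, add_zero] at h
      rw [h, hf]
      rfl
  have hrank : ((walkMatrix A).map (Int.castRingHom ℚ)).rank = n + 1 := hac
  rw [Matrix.rank_eq_finrank_span_cols] at hrank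
  have hfin : Module.finrank ℚ (Polynomial.degreeLT ℚ n) = n := by
    rw [(Polynomial.degreeLTEquiv ℚ n).finrank_eq]
    simp
  have : FiniteDimensional ℚ (Polynomial.degreeLT ℚ n) :=
    (Polynomial.degreeLTEquiv ℚ n).symm.finiteDimensional
  have h1 := Submodule.finrank_mono hsub
  have h2 := Submodule.finrank_map_le f (Polynomial.degreeLT ℚ n)
  omega

/-- The first walk vectors are independent, so some border `u` makes the bordered matrix
invertible; its determinant is `ξ ⬝ᵥ u`. -/
theorem xiVec_ne_zero {A : Matrix (Fin (n + 2)) (Fin (n + 2)) ℤ}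
    (hac : IsAlmostControllable A) : xiVec A ≠ 0 := by
  intro h0
  have hli := linearIndependent_walkVec hac
  obtain ⟨u, hu⟩ : ∃ u, u ∉ Submodule.span ℚ (Set.range
      (fun (j : Fin (n + 1)) (i : Fin (n + 2)) => (walkVec A j i : ℚ))) := by
    by_contra! hcon
    have htop := Submodule.eq_top_iff'.2 hcon
    have h1 := finrank_span_eq_card hli
    rw [htop] at h1
    simp at h1
  have hli' := linearIndependent_finSnoc.2 ⟨hli, hu⟩
  have hcol : (bordered A u).col = Fin.snoc
      (fun (j : Fin (n + 1)) (i : Fin (n + 2)) => (walkVec A j i : ℚ)) u := by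
    ext j i
    refine Fin.lastCases ?_ (fun j => ?_) j
    · simp [bordered]
    · have hc : (j : ℕ) ≠ n + 1 := j.2.ne
      simp [bordered, hc]
  rw [← hcol, Matrix.linearIndependent_cols_iff_isUnit, Matrix.isUnit_iff_isUnit_det,
    det_bordered, h0] at hli'
  simp [dotProduct] at hli'

theorem xiVec_dotProduct_self_pos {A : Matrix (Fin (n + 2)) (Fin (n + 2)) ℤ}
    (hac : IsAlmostControllable A) : 0 < xiVec A ⬝ᵥ xiVec A := by
  have h0 : 0 ≤ xiVec A ⬝ᵥ xiVec A := Finset.sum_nonneg fun i _ => mul_self_nonneg _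
  refine lt_of_le_of_ne h0 fun h => xiVec_ne_zero hac ?_
  exact dotProduct_self_eq_zero.1 h.symm

/-- The squared length of `ξ` is the Gram determinant of the columns of `V = [e, Ae, …, Aⁿe]`:
both sides, multiplied by `ξ ⬝ᵥ ξ`, equal the squared determinant of `[V, ξ]`. -/
theorem xiVec_dotProduct_self {A : Matrix (Fin (n + 2)) (Fin (n + 2)) ℤ}
    (hac : IsAlmostControllable A) :
    xiVec A ⬝ᵥ xiVec A =
      (Matrix.of fun i j : Fin (n + 1) => walkVec A i ⬝ᵥ walkVec A j).det := by
  set s := xiVec A ⬝ᵥ xiVec A with hs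
  set M : Matrix (Fin (n + 2)) (Fin (n + 2)) ℤ := bordered A (xiVec A) with hM
  have hdet : M.det = s := by
    rw [hM, det_bordered]
    rfl
  have hsub : (Mᵀ * M).submatrix (Fin.last (n + 1)).succAbove (Fin.last (n + 1)).succAbove =
      Matrix.of fun i j : Fin (n + 1) => walkVec A i ⬝ᵥ walkVec A j := by
    ext i j
    have hi : (i : ℕ) ≠ n + 1 := i.2.ne
    have hj : (j : ℕ) ≠ n + 1 := j.2.ne
    simp [Matrix.mul_apply, hM, bordered, hi, hj, dotProduct]
  have hlast : (Mᵀ * M) (Fin.last (n + 1)) (Fin.last (n + 1)) = s := by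
    simp [Matrix.mul_apply, hM, bordered, hs, dotProduct]
  have hoff : ∀ j : Fin (n + 1), (Mᵀ * M) (Fin.last (n + 1)) j.castSucc = 0 := by
    intro j
    have hj : (j : ℕ) ≠ n + 1 := j.2.ne
    have := xiVec_dotProduct_walkVec hac (k := j) j.2.le
    simpa [Matrix.mul_apply, hM, bordered, hj, dotProduct] using this
  have hG : (Mᵀ * M).det = s *
      (Matrix.of fun i j : Fin (n + 1) => walkVec A i ⬝ᵥ walkVec A j).det := by
    rw [Matrix.det_succ_row _ (Fin.last (n + 1)), Fin.sum_univ_castSucc]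
    simp only [hoff, hlast, hsub]
    simp [← two_mul, pow_mul]
  rw [Matrix.det_mul, Matrix.det_transpose, hdet] at hG
  exact mul_left_cancel₀ (xiVec_dotProduct_self_pos hac).ne' hG

theorem xiVec_dotProduct_self_eq {A B : Matrix (Fin (n + 2)) (Fin (n + 2)) ℤ}
    (hA : A.IsAdjMatrix) (hB : B.IsAdjMatrix) (hgc : GenCospectral A B)
    (hac : IsAlmostControllable A) : xiVec A ⬝ᵥ xiVec A = xiVec B ⬝ᵥ xiVec B := by
  rw [xiVec_dotProduct_self hac,
    xiVec_dotProduct_self (isAlmostControllable_of_genCospectral hA hB hgc hac)]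
  simp only [walkVec_dotProduct_eq hA hB hgc]

/-! ### The real matrix equation -/

/-- A family spanning `ℝ^m`, in the form: only `0` is orthogonal to `a 0, …, a n` and `x`. -/
def Separating {m : ℕ} (n : ℕ) (a : ℕ → Fin m → ℝ) (x : Fin m → ℝ) : Prop :=
  ∀ v : Fin m → ℝ, (∀ k ≤ n, a k ⬝ᵥ v = 0) → x ⬝ᵥ v = 0 → v = 0

theorem Separating.matrix_eq {m n : ℕ} {a : ℕ → Fin m → ℝ} {x : Fin m → ℝ}
    (h : Separating n a x) {C D : Matrix (Fin m) (Fin m) ℝ}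
    (h1 : ∀ k ≤ n, C *ᵥ a k = D *ᵥ a k) (h2 : C *ᵥ x = D *ᵥ x) : C = D := by
  have key : ∀ w : Fin m → ℝ, C *ᵥ w = D *ᵥ w → ∀ i, w ⬝ᵥ (C - D) i = 0 := by
    intro w hw i
    have : (C - D) *ᵥ w = 0 := by rw [Matrix.sub_mulVec, hw, sub_self]
    rw [dotProduct_comm]
    exact congrFun this i
  rw [← sub_eq_zero]
  funext i
  exact h _ (fun k hk => key _ (h1 k hk) i) (key _ h2 i)

theorem Separating.vec_eq {m n : ℕ} {a : ℕ → Fin m → ℝ} {x : Fin m → ℝ}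
    (h : Separating n a x) {u v : Fin m → ℝ}
    (h1 : ∀ k ≤ n, a k ⬝ᵥ u = a k ⬝ᵥ v) (h2 : x ⬝ᵥ u = x ⬝ᵥ v) : u = v := by
  rw [← sub_eq_zero]
  refine h _ (fun k hk => ?_) ?_
  · rw [dotProduct_sub, h1 k hk, sub_self]
  · rw [dotProduct_sub, h2, sub_self]

/-- A vector orthogonal to `a 0, …, a n` is a multiple of `x`, if `x` is. -/
theorem Separating.eq_smul {m n : ℕ} {a : ℕ → Fin m → ℝ} {x : Fin m → ℝ}
    (h : Separating n a x) (hx : ∀ k ≤ n, a k ⬝ᵥ x = 0) (hs : x ⬝ᵥ x ≠ 0) {v : Fin m → ℝ}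
    (hv : ∀ k ≤ n, a k ⬝ᵥ v = 0) : v = (x ⬝ᵥ v / x ⬝ᵥ x) • x := by
  refine h.vec_eq (fun k hk => ?_) ?_
  · rw [hv k hk, dotProduct_smul, hx k hk, smul_zero]
  · rw [dotProduct_smul, smul_eq_mul, div_mul_cancel₀ _ hs]

theorem dotProduct_mulVec_mulVec {m : ℕ} (Q : Matrix (Fin m) (Fin m) ℝ) (u v : Fin m → ℝ) :
    (Q *ᵥ u) ⬝ᵥ (Q *ᵥ v) = u ⬝ᵥ ((Qᵀ * Q) *ᵥ v) := by
  rw [← Matrix.mulVec_mulVec, Matrix.dotProduct_mulVec u, Matrix.vecMul_transpose]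

/-- A symmetric matrix of trace zero that kills `a 0, …, a n` vanishes: its rows are multiples
of `x`, so it is a multiple of `x xᵀ`, and the trace makes that multiple zero. -/
theorem Separating.eq_zero_of_trace {m n : ℕ} {a : ℕ → Fin m → ℝ} {x : Fin m → ℝ}
    (h : Separating n a x) (hx : ∀ k ≤ n, a k ⬝ᵥ x = 0) (hs : x ⬝ᵥ x ≠ 0)
    {D : Matrix (Fin m) (Fin m) ℝ} (hD : Dᵀ = D) (htr : D.trace = 0)
    (hk : ∀ k ≤ n, D *ᵥ a k = 0) : D = 0 := by
  have hrow : ∀ i, D i = (x ⬝ᵥ D i / x ⬝ᵥ x) • x := fun i =>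
    h.eq_smul hx hs fun k hkn => by
      rw [dotProduct_comm]
      exact congrFun (hk k hkn) i
  obtain ⟨c, hc⟩ : ∃ c : Fin m → ℝ, ∀ i j, D i j = c i * x j :=
    ⟨_, fun i j => congrFun (hrow i) j⟩
  have hsym : ∀ i j, c i * x j = c j * x i := fun i j => by
    rw [← hc, ← hc, ← congrFun (congrFun hD i) j, Matrix.transpose_apply]
  have hc0 : ∀ j, c j = 0 := by
    intro j
    have h1 : c j * (x ⬝ᵥ x) = x j * D.trace := by
      simp only [dotProduct, Matrix.trace, Matrix.diag, hc, Finset.mul_sum]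
      refine Finset.sum_congr rfl fun i _ => ?_
      linear_combination -x i * hsym i j
    rw [htr, mul_zero] at h1
    exact (mul_eq_zero.1 h1).resolve_right hs
  ext i j
  rw [hc, hc0, zero_mul, Matrix.zero_apply]

/-- The solutions of `Qᵀ A Q = B` are the linear maps that send the walk vectors of `B` to those
of `A` and the normal vector `y` of the former to plus or minus the normal vector `x` of the
latter. -/
theorem solution_iff {m n : ℕ} {A B Q : Matrix (Fin m) (Fin m) ℝ} {a b : ℕ → Fin m → ℝ}
    {x y : Fin m → ℝ} (hA : Aᵀ = A) (hB : Bᵀ = B) (htA : A.trace = 0) (htB : B.trace = 0)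
    (ha0 : a 0 = fun _ => 1) (hb0 : b 0 = fun _ => 1)
    (ha : ∀ k, a (k + 1) = A *ᵥ a k) (hb : ∀ k, b (k + 1) = B *ᵥ b k)
    (hab : ∀ i j, a i ⬝ᵥ a j = b i ⬝ᵥ b j)
    (hx : ∀ k ≤ n + 1, a k ⬝ᵥ x = 0) (hy : ∀ k ≤ n + 1, b k ⬝ᵥ y = 0)
    (hxy : x ⬝ᵥ x = y ⬝ᵥ y) (hs : y ⬝ᵥ y ≠ 0)
    (hsepA : Separating n a x) (hsepB : Separating n b y) :
    (IsRegularOrthogonal Q ∧ Qᵀ * A * Q = B) ↔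
      ((∀ k ≤ n, Q *ᵥ b k = a k) ∧ (Q *ᵥ y = x ∨ Q *ᵥ y = -x)) := by
  constructor
  · rintro ⟨⟨hQ, hQe⟩, hQAB⟩
    have hQ' : Q * Qᵀ = 1 := mul_eq_one_comm.1 hQ
    have hcomm : Q * B = A * Q := by
      rw [← hQAB, ← mul_assoc, ← mul_assoc, hQ', one_mul]
    have hwalk : ∀ k, Q *ᵥ b k = a k := by
      intro k
      induction k with
      | zero => rw [ha0, hb0, hQe]
      | succ k ih => rw [ha, hb, Matrix.mulVec_mulVec, hcomm, ← Matrix.mulVec_mulVec, ih]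
    refine ⟨fun k _ => hwalk k, ?_⟩
    have hmul := hsepA.eq_smul (fun k hk => hx k (by omega)) (hxy ▸ hs) (v := Q *ᵥ y)
      (fun k hk => by
        rw [← hwalk, dotProduct_mulVec_mulVec, hQ, Matrix.one_mulVec, hy k (by omega)])
    obtain ⟨c, hc⟩ : ∃ c : ℝ, Q *ᵥ y = c • x := ⟨_, hmul⟩
    have hnorm : c * c = 1 := by
      have h1 := dotProduct_mulVec_mulVec Q y y
      rw [hQ, Matrix.one_mulVec, hc, dotProduct_smul, smul_dotProduct, hxy, smul_eq_mul,
        smul_eq_mul, ← mul_assoc] at h1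
      exact mul_right_cancel₀ hs (by rw [h1, one_mul])
    rcases mul_self_eq_one_iff.1 hnorm with h | h
    · left; rw [hc, h, one_smul]
    · right; rw [hc, h, neg_smul, one_smul]
  · rintro ⟨hwalk, hQy⟩
    have hQyy : (Q *ᵥ y) ⬝ᵥ (Q *ᵥ y) = y ⬝ᵥ y := by
      rcases hQy with h | h <;> simp [h, hxy]
    have hQay : ∀ k ≤ n + 1, a k ⬝ᵥ (Q *ᵥ y) = 0 := by
      intro k hk
      rcases hQy with h | h <;> simp [h, hx k hk]
    have hQ : Qᵀ * Q = 1 := by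
      refine hsepB.matrix_eq (fun k hk => ?_) ?_
      · rw [Matrix.one_mulVec]
        refine hsepB.vec_eq (fun j hj => ?_) ?_
        · rw [← dotProduct_mulVec_mulVec, hwalk j hj, hwalk k hk, hab]
        · rw [← dotProduct_mulVec_mulVec, hwalk k hk, dotProduct_comm, hQay k (by omega),
            dotProduct_comm, hy k (by omega)]
      · rw [Matrix.one_mulVec]
        refine hsepB.vec_eq (fun j hj => ?_) ?_
        · rw [← dotProduct_mulVec_mulVec, hwalk j hj, hQay j (by omega), hy j (by omega)]
        · rw [← dotProduct_mulVec_mulVec, hQyy]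
    have hQ' : Q * Qᵀ = 1 := mul_eq_one_comm.1 hQ
    refine ⟨⟨hQ, ?_⟩, ?_⟩
    · have := hwalk 0 (Nat.zero_le n)
      rwa [ha0, hb0] at this
    -- The walk vectors of index `n + 1` also correspond: both sides have the same inner products
    -- with `a 0, …, a n`, and both are orthogonal to `x`.
    have hlast : Q *ᵥ b (n + 1) = a (n + 1) := by
      refine hsepA.vec_eq (fun j hj => ?_) ?_
      · rw [← hwalk j hj, dotProduct_mulVec_mulVec, hQ, Matrix.one_mulVec, hwalk j hj, hab]
      · rw [dotProduct_comm x (a _), hx _ le_rfl]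
        have h1 : (Q *ᵥ y) ⬝ᵥ (Q *ᵥ b (n + 1)) = 0 := by
          rw [dotProduct_mulVec_mulVec, hQ, Matrix.one_mulVec, dotProduct_comm, hy _ le_rfl]
        rcases hQy with h | h <;> simpa [h] using h1
    have hwalk' : ∀ k ≤ n + 1, Q *ᵥ b k = a k := by
      intro k hk
      rcases hk.lt_or_eq with hk | rfl
      · exact hwalk k (by omega)
      · exact hlast
    rw [← sub_eq_zero]
    refine hsepB.eq_zero_of_trace (fun k hk => hy k (by omega)) hs ?_ ?_ ?_
    · simp [Matrix.transpose_mul, hA, hB, Matrix.mul_assoc]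
    · rw [Matrix.trace_sub, htB, Matrix.mul_assoc, Matrix.trace_mul_comm, Matrix.mul_assoc, hQ',
        mul_one, htA, sub_zero]
    · intro k hk
      rw [Matrix.sub_mulVec, ← Matrix.mulVec_mulVec, ← Matrix.mulVec_mulVec, hwalk k hk, ← ha,
        ← hb, ← hwalk' (k + 1) (by omega), Matrix.mulVec_mulVec, hQ, Matrix.one_mulVec, sub_self]

/-! ### The matrices `W_δ` -/

theorem twoPow_ne_zero (n : ℕ) : twoPow n ≠ 0 := zpow_ne_zero _ two_ne_zero

theorem Wdelta_eq_bordered (A : Matrix (Fin (n + 2)) (Fin (n + 2)) ℤ) (δ : ℕ) :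
    Wdelta A δ = bordered A fun i => (-1 : ℚ) ^ δ * twoPow n * (xiVec A i : ℚ) := rfl

theorem isUnit_det_Wdelta {A : Matrix (Fin (n + 2)) (Fin (n + 2)) ℤ}
    (hac : IsAlmostControllable A) (δ : ℕ) : IsUnit (Wdelta A δ).det := by
  have h : (fun i => (-1 : ℚ) ^ δ * twoPow n * (xiVec A i : ℚ)) =
      ((-1 : ℚ) ^ δ * twoPow n) • fun i => (xiVec A i : ℚ) := rfl
  have h1 : (fun i => (xiVec A i : ℚ)) ⬝ᵥ (fun i => (xiVec A i : ℚ)) ≠ 0 := by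
    have := (xiVec_dotProduct_self_pos hac).ne'
    simp only [dotProduct] at this ⊢
    exact_mod_cast this
  rw [Wdelta_eq_bordered, det_bordered, h, dotProduct_smul, isUnit_iff_ne_zero]
  exact smul_ne_zero (mul_ne_zero (pow_ne_zero _ (by norm_num)) (twoPow_ne_zero n)) h1

theorem separating_walkVec {A : Matrix (Fin (n + 2)) (Fin (n + 2)) ℤ}
    (hac : IsAlmostControllable A) :
    Separating n (fun k i => (walkVec A k i : ℝ)) (fun i => (xiVec A i : ℝ)) := by
  intro v h1 h2
  have hdet : (bordered A fun i => (xiVec A i : ℝ)).det ≠ 0 := by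
    rw [det_bordered]
    have := (xiVec_dotProduct_self_pos hac).ne'
    simp only [dotProduct] at this ⊢
    exact_mod_cast this
  refine Matrix.eq_zero_of_mulVec_eq_zero (M := (bordered A fun i => (xiVec A i : ℝ))ᵀ)
    (by rwa [Matrix.det_transpose]) ?_
  funext j
  by_cases hj : (j : ℕ) = n + 1
  · simpa [Matrix.mulVec, bordered, hj, dotProduct] using h2
  · simpa [Matrix.mulVec, bordered, hj, dotProduct] using h1 j (by omega)

/-- `Q = W_δ(A) W₀(B)⁻¹` says that `Q` carries the columns of `W₀(B)` to those of `W_δ(A)`. -/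
theorem eq_Wdelta_mul_inv_iff {A B : Matrix (Fin (n + 2)) (Fin (n + 2)) ℤ}
    (hacB : IsAlmostControllable B) (δ : ℕ) (Q : Matrix (Fin (n + 2)) (Fin (n + 2)) ℝ) :
    Q = (Wdelta A δ * (Wdelta B 0)⁻¹).map ((↑) : ℚ → ℝ) ↔
      (∀ k ≤ n, Q *ᵥ (fun i => (walkVec B k i : ℝ)) = fun i => (walkVec A k i : ℝ)) ∧
        Q *ᵥ (fun i => (xiVec B i : ℝ)) = (-1 : ℝ) ^ δ • fun i => (xiVec A i : ℝ) := by
  have hu := isUnit_det_Wdelta hacB 0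
  let φ := (Rat.castHom ℝ).mapMatrix (m := Fin (n + 2))
  have hmul : φ (Wdelta A δ * (Wdelta B 0)⁻¹) * φ (Wdelta B 0) = φ (Wdelta A δ) := by
    rw [← map_mul, Matrix.nonsing_inv_mul_cancel_right _ _ hu]
  have hinv : φ (Wdelta B 0) * φ (Wdelta B 0)⁻¹ = 1 := by
    rw [← map_mul, Matrix.mul_nonsing_inv _ hu, map_one]
  have h1 : Q = (Wdelta A δ * (Wdelta B 0)⁻¹).map ((↑) : ℚ → ℝ) ↔
      Q * φ (Wdelta B 0) = φ (Wdelta A δ) := by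
    constructor
    · rintro rfl
      exact hmul
    · intro h
      change Q = φ _
      rw [map_mul, ← h, mul_assoc, hinv, mul_one]
  have ht : (twoPow n : ℝ) ≠ 0 := by exact_mod_cast twoPow_ne_zero n
  have hcol : ∀ (C : Matrix (Fin (n + 2)) (Fin (n + 2)) ℤ) (ε : ℕ) (j : Fin (n + 2)),
      (φ (Wdelta C ε)).col j = if (j : ℕ) = n + 1 then
        (twoPow n : ℝ) • (-1 : ℝ) ^ ε • fun i => (xiVec C i : ℝ)
        else fun i => (walkVec C j i : ℝ) := by
    intro C ε j
    funext i
    by_cases hj : (j : ℕ) = n + 1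
    · simp [φ, Wdelta, hj]
      ring
    · simp [φ, Wdelta, hj, walkMatrix, walkVec]
  have h2 : Q * φ (Wdelta B 0) = φ (Wdelta A δ) ↔
      ∀ j, Q *ᵥ (φ (Wdelta B 0)).col j = (φ (Wdelta A δ)).col j := by
    constructor
    · intro h j
      rw [← h]
      rfl
    · intro h
      ext i j
      exact congrFun (h j) i
  rw [h1, h2]
  simp only [hcol]
  constructor
  · intro h
    constructor
    · intro k hk
      have := h ⟨k, by omega⟩
      have hk' : k ≠ n + 1 := by omega
      simpa only [hk', if_false] using this
    · have := h (Fin.last (n + 1))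
      simp only [Fin.val_last, if_true, pow_zero, one_smul, Matrix.mulVec_smul] at this
      exact smul_right_injective _ ht this
  · rintro ⟨hw, hx⟩ j
    split_ifs with hj
    · rw [Matrix.mulVec_smul, pow_zero, one_smul, hx]
    · exact hw j (by omega)

/-- for generalized cospectral almost controllable graphs, the equation
`Qᵀ A(G) Q = A(H)` over real regular orthogonal matrices has exactly the two (distinct,
rational) solutions `W₀(G)·W₀(H)⁻¹` and `W₁(G)·W₀(H)⁻¹`. -/
theorem exactly_two_regular_orthogonal_solutions
    (n : ℕ) (A B : Matrix (Fin (n + 2)) (Fin (n + 2)) ℤ)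
    (hA : A.IsAdjMatrix) (hB : B.IsAdjMatrix)
    (hac : IsAlmostControllable A) (hgc : GenCospectral A B) :
    IsAlmostControllable B ∧ IsUnit (Wdelta B 0).det ∧
    (Wdelta A 0 * (Wdelta B 0)⁻¹).map ((↑) : ℚ → ℝ) ≠
      (Wdelta A 1 * (Wdelta B 0)⁻¹).map ((↑) : ℚ → ℝ) ∧
    ∀ Q : Matrix (Fin (n + 2)) (Fin (n + 2)) ℝ,
      (IsRegularOrthogonal Q ∧ Qᵀ * A.map ((↑) : ℤ → ℝ) * Q = B.map ((↑) : ℤ → ℝ)) ↔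
        (Q = (Wdelta A 0 * (Wdelta B 0)⁻¹).map ((↑) : ℚ → ℝ) ∨
         Q = (Wdelta A 1 * (Wdelta B 0)⁻¹).map ((↑) : ℚ → ℝ)) := by
  have hacB := isAlmostControllable_of_genCospectral hA hB hgc hac
  refine ⟨hacB, isUnit_det_Wdelta hacB 0, ?_, fun Q => ?_⟩
  · intro h
    have h0 := ((eq_Wdelta_mul_inv_iff (A := A) hacB 0 _).1 rfl).2
    have h1 := ((eq_Wdelta_mul_inv_iff (A := A) hacB 1 _).1 h).2
    rw [h0] at h1
    refine xiVec_ne_zero hac (funext fun i => ?_)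
    have h2 := congrFun h1 i
    simp only [pow_zero, one_smul, pow_one, neg_smul, Pi.neg_apply] at h2
    have h3 : (xiVec A i : ℝ) = 0 := by linarith
    exact_mod_cast h3
  · rw [eq_Wdelta_mul_inv_iff hacB, eq_Wdelta_mul_inv_iff hacB, ← and_or_left,
      pow_zero, one_smul, pow_one, neg_smul, one_smul]
    have hT : ∀ C : Matrix (Fin (n + 2)) (Fin (n + 2)) ℤ, C.IsAdjMatrix →
        (C.map ((↑) : ℤ → ℝ))ᵀ = C.map ((↑) : ℤ → ℝ) := fun C hC => by
      rw [← Matrix.transpose_map, hC.symm.eq]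
    have htr : ∀ C : Matrix (Fin (n + 2)) (Fin (n + 2)) ℤ, C.IsAdjMatrix →
        (C.map ((↑) : ℤ → ℝ)).trace = 0 := fun C hC => by
      simp [Matrix.trace, hC.apply_diag]
    have h0 : ∀ C : Matrix (Fin (n + 2)) (Fin (n + 2)) ℤ,
        (fun i => (walkVec C 0 i : ℝ)) = fun _ => 1 := fun C => by
      simp [walkVec, eVec]
    have hs : ∀ (C : Matrix (Fin (n + 2)) (Fin (n + 2)) ℤ) (k : ℕ),
        (fun i => (walkVec C (k + 1) i : ℝ)) =
          C.map ((↑) : ℤ → ℝ) *ᵥ fun i => (walkVec C k i : ℝ) := fun C k => by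
      rw [walkVec_succ]
      ext i
      simp [Matrix.mulVec, dotProduct]
    have hdot : ∀ u v : Fin (n + 2) → ℤ,
        (fun i => (u i : ℝ)) ⬝ᵥ (fun i => (v i : ℝ)) = ((u ⬝ᵥ v : ℤ) : ℝ) := fun u v => by
      simp [dotProduct]
    refine solution_iff (a := fun k i => (walkVec A k i : ℝ)) (b := fun k i => (walkVec B k i : ℝ))
      (hT A hA) (hT B hB) (htr A hA) (htr B hB) (h0 A) (h0 B) (hs A) (hs B)
      (fun i j => ?_) (fun k hk => ?_) (fun k hk => ?_) ?_ ?_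
      (separating_walkVec hac) (separating_walkVec hacB)
    · rw [hdot, hdot, walkVec_dotProduct_eq hA hB hgc]
    · rw [hdot, dotProduct_comm, xiVec_dotProduct_walkVec hac hk, Int.cast_zero]
    · rw [hdot, dotProduct_comm, xiVec_dotProduct_walkVec hacB hk, Int.cast_zero]
    · rw [hdot, hdot, xiVec_dotProduct_self_eq hA hB hgc hac]
    · rw [hdot]
      exact_mod_cast (xiVec_dotProduct_self_pos hacB).ne'

end AlmostControllableGraphs
end

section
/- Let n ≥ 2, let G be an almost controllable graph on Fin n, and let H be a graph on Fin n generalized cospectral with G. Then H is also almost controllable, and ξ(H)ᵀ·ξ(H) = ξ(G)ᵀ·ξ(G). -/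
/-!
The two graphs have the same walk counts `eᵀ Aᵏ e = eᵀ Bᵏ e`, and everything else follows because
both conclusions depend only on the Gram matrix `Wᵀ W`, whose `(i, j)` entry is `eᵀ A^(i+j) e`.

*Walk counts* (`walkCount_eq`). Since the complement has adjacency matrix `J − 1 − A`, substituting
`-X - 1` in its characteristic polynomial gives `± det (X·1 − A + J)`. By the matrix determinant
lemma this is `± (χ_A + eᵀ adj(X·1 − A) e)`, so generalized cospectrality makes the polynomial
`q₀ = eᵀ adj(X·1 − A) e` the same for both graphs. Setting `q_k = eᵀ Aᵏ adj(X·1 − A) e`, one has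
`X q_k = χ_A · (eᵀ Aᵏ e) + q_{k+1}` with `deg q_{k+1} < deg χ_A`. Uniqueness of division with
remainder then determines all `eᵀ Aᵏ e` and all `q_k` from `χ_A` and `q₀`.

*Conclusions.* Over `ℚ`, `rank W = rank (Wᵀ W)`. The vector `ξ` is the last row of `adj W`, and
`adj (Wᵀ W) = adj W · (adj W)ᵀ`, so `ξᵀ ξ` is the last diagonal entry of `adj (Wᵀ W)`.
-/

open Matrix

namespace AlmostControllableGraphs

variable {n : ℕ}

open Polynomial

/-- Matrix determinant lemma, in adjugate form, for a rank-one all-ones perturbation of a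
matrix with nonzero determinant over a domain; proved in the fraction field. -/
lemma det_add_ones {R : Type*} [CommRing R] [IsDomain R] {m : ℕ} (M : Matrix (Fin m) (Fin m) R)
    (hM : M.det ≠ 0) :
    (M + Matrix.of fun _ _ => 1).det = M.det + ∑ i, ∑ j, M.adjugate i j := by
  have inj := IsFractionRing.injective R (FractionRing R)
  apply inj
  set f := algebraMap R (FractionRing R) with hf
  have hdet : (f.mapMatrix M).det = f M.det := (RingHom.map_det f M).symm
  have hadj : (f.mapMatrix M).adjugate = f.mapMatrix M.adjugate := (RingHom.map_adjugate f M).symm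
  have h0 : f M.det ≠ 0 := by
    rw [Ne, map_eq_zero_iff f inj]
    exact hM
  have hu : IsUnit (f.mapMatrix M).det := by
    rw [hdet]
    exact h0.isUnit
  have key := det_add_replicateCol_mul_replicateRow (ι := Unit) hu (fun _ => 1) (fun _ => 1)
  have e1 : f.mapMatrix (M + Matrix.of fun _ _ => 1) =
      f.mapMatrix M + replicateCol Unit (fun _ => (1 : FractionRing R)) *
        replicateRow Unit (fun _ => (1 : FractionRing R)) := by
    ext i j
    simp [Matrix.mul_apply]
  rw [RingHom.map_det, e1, key, det_unique (n := Unit), Matrix.inv_def, hadj, hdet, Ring.inverse_eq_inv']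
  simp [Matrix.mul_apply, map_sum, mul_add, Finset.mul_sum, h0]
  rw [Finset.sum_comm]

/-- The number of walks of length `k`, i.e. `eᵀ Aᵏ e`. -/
def walkCount (A : Matrix (Fin (n + 2)) (Fin (n + 2)) ℤ) (k : ℕ) : ℤ :=
  eVec (n + 2) ⬝ᵥ ((A ^ k) *ᵥ eVec (n + 2))

/-- The polynomial `eᵀ Aᵏ adj(X·1 − A) e`. -/
noncomputable def walkNumerator (A : Matrix (Fin (n + 2)) (Fin (n + 2)) ℤ) (k : ℕ) : ℤ[X] :=
  ∑ i, ∑ j, ((C : ℤ →+* ℤ[X]).mapMatrix (A ^ k) * (charmatrix A).adjugate) i j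

lemma degree_adjugate_charmatrix (A : Matrix (Fin (n + 2)) (Fin (n + 2)) ℤ)
    (i j : Fin (n + 2)) : ((charmatrix A).adjugate i j).degree < ((n + 2 : ℕ) : WithBot ℕ) := by
  have h : (charmatrix A).submatrix j.succAbove i.succAbove =
      (X : ℤ[X]) • ((1 : Matrix (Fin (n + 2)) (Fin (n + 2)) ℤ).submatrix
        j.succAbove i.succAbove).map C + (-(A.submatrix j.succAbove i.succAbove)).map C := by
    ext1 a b
    simp only [submatrix_apply, charmatrix_apply, Matrix.add_apply, Matrix.smul_apply,
      map_apply, Matrix.neg_apply, map_neg, smul_eq_mul, sub_eq_add_neg, Matrix.one_apply, diagonal_apply]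
    split_ifs <;> simp
  rw [adjugate_fin_succ_eq_det_submatrix, h]
  have hd := natDegree_det_X_add_C_le ((1 : Matrix (Fin (n + 2)) (Fin (n + 2)) ℤ).submatrix
        j.succAbove i.succAbove) (-(A.submatrix j.succAbove i.succAbove))
  rw [Fintype.card_fin] at hd
  rcases neg_one_pow_eq_or ℤ[X] ((j : ℕ) + (i : ℕ)) with hs | hs <;> rw [hs] <;>
    simp only [one_mul, neg_mul, degree_neg] <;>
    exact (degree_le_of_natDegree_le hd).trans_lt (by exact_mod_cast Nat.lt_succ_self _)

lemma degree_walkNumerator (A : Matrix (Fin (n + 2)) (Fin (n + 2)) ℤ) (k : ℕ) :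
    (walkNumerator A k).degree < ((n + 2 : ℕ) : WithBot ℕ) := by
  rw [← mem_degreeLT]
  refine Submodule.sum_mem _ fun i _ => Submodule.sum_mem _ fun j _ => ?_
  rw [mul_apply]
  refine Submodule.sum_mem _ fun l _ => ?_
  have h := Submodule.smul_mem (degreeLT ℤ (n + 2)) ((A ^ k) i l)
    (mem_degreeLT.2 (degree_adjugate_charmatrix A l j))
  simpa [smul_eq_C_mul] using h

/-- The identity `(X·1 − A) adj(X·1 − A) = χ_A · 1`, multiplied by `eᵀ Aᵏ` on the left and by `e`
on the right. -/
lemma walkNumerator_succ (A : Matrix (Fin (n + 2)) (Fin (n + 2)) ℤ) (k : ℕ) :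
    X * walkNumerator A k - walkNumerator A (k + 1) = A.charpoly * C (walkCount A k) := by
  have h : (X : ℤ[X]) • ((C : ℤ →+* ℤ[X]).mapMatrix (A ^ k) * (charmatrix A).adjugate) -
      (C : ℤ →+* ℤ[X]).mapMatrix (A ^ (k + 1)) * (charmatrix A).adjugate =
      A.charpoly • (C : ℤ →+* ℤ[X]).mapMatrix (A ^ k) := by
    have h1 := congrArg ((C : ℤ →+* ℤ[X]).mapMatrix (A ^ k) * ·) (mul_adjugate (charmatrix A))
    simp only [mul_smul_comm, mul_one] at h1
    rw [charpoly, ← h1, ← Matrix.mul_assoc, pow_succ, map_mul]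
    nth_rewrite 3 [charmatrix]
    rw [Matrix.mul_sub, Matrix.sub_mul, scalar_apply, ← smul_one_eq_diagonal, mul_smul_comm,
      mul_one, smul_mul_assoc]
  have h2 := congrArg (fun M : Matrix (Fin (n + 2)) (Fin (n + 2)) ℤ[X] => ∑ i, ∑ j, M i j) h
  simp only [Matrix.sub_apply, Matrix.smul_apply, smul_eq_mul, Finset.sum_sub_distrib, ← Finset.mul_sum] at h2
  simpa [walkNumerator, walkCount, dotProduct, mulVec, eVec] using h2

/-- The complement's characteristic polynomial, after the substitution `X ↦ -X - 1`, is
`± det (X·1 − A + J)`, which the matrix determinant lemma expands. -/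
lemma charpoly_complMat_comp (A : Matrix (Fin (n + 2)) (Fin (n + 2)) ℤ) (hA : A.IsAdjMatrix) :
    (complMat A).charpoly.comp (-X - 1) =
      (-1) ^ (n + 2) * (A.charpoly + walkNumerator A 0) := by
  have h : (compRingHom (-X - 1 : ℤ[X])).mapMatrix (charmatrix (complMat A)) =
      -(charmatrix A + Matrix.of fun _ _ => 1) := by
    ext1 i j
    by_cases hij : i = j
    · subst hij
      simp [complMat, hA.apply_diag]
      ring
    · simp [complMat, hij]
      ring
  have h1 : (complMat A).charpoly.comp (-X - 1) =
      compRingHom (-X - 1 : ℤ[X]) (charmatrix (complMat A)).det := rfl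
  rw [h1, RingHom.map_det, h, det_neg, Fintype.card_fin,
    det_add_ones _ (charpoly_monic A).ne_zero]
  simp [walkNumerator, charpoly]

lemma walkNumerator_zero_eq {A B : Matrix (Fin (n + 2)) (Fin (n + 2)) ℤ}
    (hA : A.IsAdjMatrix) (hB : B.IsAdjMatrix) (hgc : GenCospectral A B) :
    walkNumerator A 0 = walkNumerator B 0 := by
  have h := charpoly_complMat_comp A hA
  rw [hgc.2, charpoly_complMat_comp B hB, hgc.1] at h
  have h2 := mul_left_cancel₀ (pow_ne_zero _ (by simp)) h
  exact (add_left_cancel h2).symm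

/-- Uniqueness of division by the monic polynomial `χ_A = χ_B`: the quotient and the remainder in
`walkNumerator_succ` are determined by the previous numerator. -/
lemma walk_step {A B : Matrix (Fin (n + 2)) (Fin (n + 2)) ℤ} (hAB : A.charpoly = B.charpoly)
    (k : ℕ) (hk : walkNumerator A k = walkNumerator B k) :
    walkCount A k = walkCount B k ∧ walkNumerator A (k + 1) = walkNumerator B (k + 1) := by
  have hdeg : A.charpoly.degree = ((n + 2 : ℕ) : WithBot ℕ) := by
    rw [charpoly_degree_eq_dim, Fintype.card_fin]
  have ha := walkNumerator_succ A k
  have hb := walkNumerator_succ B k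
  rw [← hAB, ← hk] at hb
  have ua := div_modByMonic_unique _ _ (charpoly_monic A)
    ⟨show walkNumerator A (k + 1) + A.charpoly * C (walkCount A k) = X * walkNumerator A k by
      rw [← ha]; ring, by rw [hdeg]; exact degree_walkNumerator A _⟩
  have ub := div_modByMonic_unique _ _ (charpoly_monic A)
    ⟨show walkNumerator B (k + 1) + A.charpoly * C (walkCount B k) = X * walkNumerator A k by
      rw [← hb]; ring, by rw [hdeg]; exact degree_walkNumerator B _⟩
  exact ⟨C_injective (ua.1.symm.trans ub.1), ua.2.symm.trans ub.2⟩

lemma walkCount_eq {A B : Matrix (Fin (n + 2)) (Fin (n + 2)) ℤ}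
    (hA : A.IsAdjMatrix) (hB : B.IsAdjMatrix) (hgc : GenCospectral A B) (k : ℕ) :
    walkCount A k = walkCount B k := by
  suffices h : walkNumerator A k = walkNumerator B k from (walk_step hgc.1 k h).1
  induction k with
  | zero => exact walkNumerator_zero_eq hA hB hgc
  | succ k ih => exact (walk_step hgc.1 k ih).2

lemma gram_walkMatrix (A : Matrix (Fin (n + 2)) (Fin (n + 2)) ℤ) (hA : A.IsSymm) :
    (walkMatrix A)ᵀ * walkMatrix A =
      Matrix.of fun i j : Fin (n + 2) => walkCount A ((i : ℕ) + (j : ℕ)) := by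
  ext i j
  have hs : (A ^ (i : ℕ))ᵀ = A ^ (i : ℕ) := by rw [transpose_pow, hA.eq]
  calc ((walkMatrix A)ᵀ * walkMatrix A) i j
      = ((A ^ (i : ℕ)) *ᵥ eVec (n + 2)) ⬝ᵥ ((A ^ (j : ℕ)) *ᵥ eVec (n + 2)) := rfl
    _ = walkCount A ((i : ℕ) + (j : ℕ)) := by
      rw [walkCount, pow_add, ← mulVec_mulVec, dotProduct_mulVec (eVec (n + 2)),
        ← mulVec_transpose, hs]

/-- `ξ` is the last row of `adj W`, so multiplicativity of the adjugate makes its squared norm an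
entry of the adjugate of the Gram matrix. -/
lemma xi_norm_eq_adjugate (A : Matrix (Fin (n + 2)) (Fin (n + 2)) ℤ) :
    xiVec A ⬝ᵥ xiVec A =
      ((walkMatrix A)ᵀ * walkMatrix A).adjugate (Fin.last (n + 1)) (Fin.last (n + 1)) := by
  have h : ∀ i, (walkMatrix A).adjugate (Fin.last (n + 1)) i = xiVec A i := by
    intro i
    rw [adjugate_fin_succ_eq_det_submatrix, Fin.succAbove_last]
    rfl
  rw [adjugate_mul_distrib, ← adjugate_transpose, mul_apply]
  simp only [transpose_apply, h]
  rfl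

lemma rank_walkMatrix (A : Matrix (Fin (n + 2)) (Fin (n + 2)) ℤ) :
    ((walkMatrix A).map ((↑) : ℤ → ℚ)).rank =
      ((Int.castRingHom ℚ).mapMatrix ((walkMatrix A)ᵀ * walkMatrix A)).rank := by
  rw [map_mul, ← rank_transpose_mul_self]
  rfl

/-- a graph generalized cospectral with an almost controllable graph is
almost controllable, and `ξ(H)ᵀξ(H) = ξ(G)ᵀξ(G)`. -/
theorem genCospectral_almostControllable_and_xi_norm_eq
    (n : ℕ) (A B : Matrix (Fin (n + 2)) (Fin (n + 2)) ℤ)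
    (hA : A.IsAdjMatrix) (hB : B.IsAdjMatrix)
    (hac : IsAlmostControllable A) (hgc : GenCospectral A B) :
    IsAlmostControllable B ∧ xiVec B ⬝ᵥ xiVec B = xiVec A ⬝ᵥ xiVec A := by
  have hG : (walkMatrix B)ᵀ * walkMatrix B = (walkMatrix A)ᵀ * walkMatrix A := by
    rw [gram_walkMatrix A hA.symm, gram_walkMatrix B hB.symm]
    simp only [walkCount_eq hA hB hgc]
  constructor
  · rw [IsAlmostControllable, rank_walkMatrix, hG, ← rank_walkMatrix]
    exact hac
  · rw [xi_norm_eq_adjugate, xi_norm_eq_adjugate, hG]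

end AlmostControllableGraphs
end

section
/- Let n ≥ 2, let G be an almost controllable graph on Fin n having a pair of twins τ ≠ τ′, and let H be a graph on Fin n generalized cospectral with G. Then any two rational regular orthogonal matrices Q₁ and Q₂ satisfying Q₁ᵀ·A(G)·Q₁ = A(H) and Q₂ᵀ·A(G)·Q₂ = A(H) have the same level, i.e., ℓ(Q₁) = ℓ(Q₂). -/
/-!
Put `R = Q₁ Q₂ᵀ`. It is orthogonal, fixes `e` and commutes with `A(G)`, hence fixes every column
`A ^ k e` of the walk matrix `W`. So the rows of `R - 1` lie in the left kernel of `W`, which is a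
line because `W` has corank one; as walk vectors agree on twins (`walk_swap`), that line is spanned
by `α = e_τ' - e_τ` (`left_kernel`). Therefore `R = 1 + c αᵀ` for some vector `c`, and
orthogonality leaves only `c = 0` or `c = -α`, that is, `R` is the identity or the transposition of
the twins (`commuting_eq`). In either case `Q₁ = R Q₂` is obtained from `Q₂` by permuting rows,
which preserves the level (`level_perm`).
-/

open Matrix

namespace AlmostControllableGraphs

variable {n : ℕ}

/-- The walk vectors `A ^ k e` of a graph take equal values on a pair of twins, since they are
invariant under every automorphism. -/
lemma walk_swap (A : Matrix (Fin (n + 2)) (Fin (n + 2)) ℤ) (τ τ' : Fin (n + 2))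
    (htw : IsTwinPair A τ τ') (k : ℕ) (i : Fin (n + 2)) :
    (A ^ k *ᵥ eVec (n + 2)) (Equiv.swap τ τ' i) = (A ^ k *ᵥ eVec (n + 2)) i := by
  induction k generalizing i with
  | zero => simp [eVec]
  | succ k ih =>
    rw [pow_succ', ← mulVec_mulVec]
    simp only [mulVec, dotProduct] at ih ⊢
    rw [← Equiv.sum_comp (Equiv.swap τ τ')]
    exact Finset.sum_congr rfl fun j _ => by rw [htw, ih]

/-- When the walk matrix has corank one, its left kernel is the line spanned by `α`. -/
lemma left_kernel (A : Matrix (Fin (n + 2)) (Fin (n + 2)) ℤ) (hac : IsAlmostControllable A)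
    (τ τ' : Fin (n + 2)) (hne : τ ≠ τ') (htw : IsTwinPair A τ τ') (v : Fin (n + 2) → ℚ)
    (hv : ((walkMatrix A).map ((↑) : ℤ → ℚ))ᵀ *ᵥ v = 0) :
    ∃ c : ℚ, ∀ j, v j = c * (alphaVec τ τ' j : ℚ) := by
  set W := (walkMatrix A).map ((↑) : ℤ → ℚ) with hW
  have hrank : Wᵀ.rank = n + 1 := by rw [rank_transpose]; exact hac
  have hker : Module.finrank ℚ (LinearMap.ker Wᵀ.mulVecLin) = 1 := by
    have h := LinearMap.finrank_range_add_finrank_ker Wᵀ.mulVecLin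
    have h' : Module.finrank ℚ (LinearMap.range Wᵀ.mulVecLin) = n + 1 := hrank
    rw [h', Module.finrank_fin_fun] at h
    omega
  have hα : Wᵀ *ᵥ (fun i => (alphaVec τ τ' i : ℚ)) = 0 := by
    ext j
    have h := walk_swap A τ τ' htw j τ
    rw [Equiv.swap_apply_left] at h
    have hsum : ∀ f : Fin (n + 2) → ℚ,
        ∑ i, f i * (alphaVec τ τ' i : ℚ) = f τ' - f τ := by
      intro f
      have : ∀ i, f i * (alphaVec τ τ' i : ℚ)
          = (if i = τ' then f i else 0) - (if i = τ then f i else 0) := by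
        intro i
        unfold alphaVec
        by_cases h1 : i = τ
        · subst h1; simp [hne]
        · by_cases h2 : i = τ' <;> simp [h1, h2, hne.symm]
      simp [this, Finset.sum_sub_distrib]
    simp only [mulVec, dotProduct, transpose_apply, hsum]
    simp only [hW, map_apply, walkMatrix, of_apply, h, sub_self, Pi.zero_apply]
  have hne0 : (⟨_, LinearMap.mem_ker.2 hα⟩ : LinearMap.ker Wᵀ.mulVecLin) ≠ 0 := by
    intro h
    have := congrFun (congrArg Subtype.val h) τ
    simp [alphaVec] at this
  obtain ⟨c, hc⟩ := (finrank_eq_one_iff_of_nonzero' _ hne0).1 hker ⟨v, LinearMap.mem_ker.2 hv⟩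
  exact ⟨c, fun j => by simpa using (congrFun (congrArg Subtype.val hc) j).symm⟩

/-- Permuting the rows of a matrix does not change its level. -/
lemma level_perm {m : ℕ} (P Q : Matrix (Fin m) (Fin m) ℚ) (σ : Equiv.Perm (Fin m))
    (h : ∀ i j, P i j = Q (σ i) j) : level P = level Q := by
  unfold level
  congr 1
  ext k
  simp only [Set.mem_ofPred_eq, h]
  refine and_congr_right fun _ => ⟨fun H i j => ?_, fun H i j => H _ j⟩
  simpa using H (σ.symm i) j

/-- An orthogonal `R` commuting with `A` and fixing `e` is either the identity or the
transposition of the twins. -/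
lemma commuting_eq (A : Matrix (Fin (n + 2)) (Fin (n + 2)) ℤ) (hac : IsAlmostControllable A)
    (τ τ' : Fin (n + 2)) (hne : τ ≠ τ') (htw : IsTwinPair A τ τ')
    (R : Matrix (Fin (n + 2)) (Fin (n + 2)) ℚ) (hR : R * Rᵀ = 1)
    (hRe : R *ᵥ (fun _ => (1 : ℚ)) = fun _ => 1)
    (hcomm : R * A.map ((↑) : ℤ → ℚ) = A.map ((↑) : ℤ → ℚ) * R) :
    R = 1 ∨ R = (Equiv.swap τ τ').toPEquiv.toMatrix := by
  have hwalk : ∀ k : ℕ, R *ᵥ ((A.map ((↑) : ℤ → ℚ)) ^ k *ᵥ (fun _ => (1 : ℚ)))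
      = (A.map ((↑) : ℤ → ℚ)) ^ k *ᵥ (fun _ => (1 : ℚ)) := by
    intro k
    have hk : R * (A.map ((↑) : ℤ → ℚ)) ^ k = (A.map ((↑) : ℤ → ℚ)) ^ k * R :=
      (Commute.pow_right (show Commute R _ from hcomm) k).eq
    rw [mulVec_mulVec, hk, ← mulVec_mulVec, hRe]
  have hWcol : ∀ i j, ((walkMatrix A).map ((↑) : ℤ → ℚ)) i j
      = ((A.map ((↑) : ℤ → ℚ)) ^ (j : ℕ) *ᵥ (fun _ => (1 : ℚ))) i := by
    intro i j
    have hp : (A.map ((↑) : ℤ → ℚ)) ^ (j : ℕ) = (A ^ (j : ℕ)).map ((↑) : ℤ → ℚ) :=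
      (Matrix.map_pow A (Int.castRingHom ℚ) j).symm
    rw [hp]
    simp [walkMatrix, mulVec, dotProduct, eVec]
  have hRW : R * (walkMatrix A).map ((↑) : ℤ → ℚ) = (walkMatrix A).map ((↑) : ℤ → ℚ) := by
    ext i j
    have := congrFun (hwalk j) i
    rw [hWcol, ← this, mul_apply]
    simp only [hWcol]
    rfl
  -- Every row of `R - 1` lies in the left kernel of the walk matrix.
  have hrow : ∀ i, ∃ c : ℚ, ∀ j, (R - 1) i j = c * (alphaVec τ τ' j : ℚ) := by
    intro i
    refine left_kernel A hac τ τ' hne htw _ ?_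
    have h0 : (R - 1) * (walkMatrix A).map ((↑) : ℤ → ℚ) = 0 := by
      rw [sub_mul, hRW, one_mul, sub_self]
    ext j
    have := congrFun (congrFun h0 i) j
    rw [mul_apply] at this
    simpa [mulVec, dotProduct, mul_comm] using this
  choose c hc using hrow
  have hD : R = 1 + vecMulVec c (fun j => (alphaVec τ τ' j : ℚ)) := by
    ext i j
    have := hc i j
    rw [Matrix.sub_apply] at this
    rw [Matrix.add_apply, vecMulVec_apply]
    linarith
  have hαα : (fun j => (alphaVec τ τ' j : ℚ)) ⬝ᵥ (fun j => (alphaVec τ τ' j : ℚ)) = 2 := by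
    have : ∀ j, (alphaVec τ τ' j : ℚ) * (alphaVec τ τ' j : ℚ)
        = (if j = τ then 1 else 0) + (if j = τ' then 1 else 0) := by
      intro i
      unfold alphaVec
      by_cases h1 : i = τ
      · subst h1; simp [hne]
      · by_cases h2 : i = τ' <;> simp [h1, h2, hne.symm]
    simp only [dotProduct, this, Finset.sum_add_distrib]
    norm_num
  -- Orthogonality of `1 + c αᵀ`, entry by entry.
  have key : ∀ i j, c i * (alphaVec τ τ' j : ℚ) + (alphaVec τ τ' i : ℚ) * c j
      + 2 * (c i * c j) = 0 := by
    intro i j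
    have h := hR
    rw [hD, transpose_add, transpose_one, transpose_vecMulVec, add_mul, mul_add, mul_add,
      vecMulVec_mul_vecMulVec, hαα] at h
    have h := congrFun (congrFun h i) j
    simp [vecMulVec_apply] at h
    linarith
  have hτ' : alphaVec τ τ' τ' = 1 := by simp [alphaVec, hne.symm]
  have hτ : alphaVec τ τ' τ = -1 := by simp [alphaVec]
  have hother : ∀ i, i ≠ τ → i ≠ τ' → c i = 0 := by
    intro i h1 h2
    have := key i i
    simpa [alphaVec, h1, h2] using this
  have k1 := key τ τ
  have k2 := key τ' τ'
  have k3 := key τ τ'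
  rw [hτ] at k1 k3
  rw [hτ'] at k2 k3
  push_cast at k1 k2 k3
  have hcase : c τ = 0 ∨ c τ = 1 := by
    have : c τ * (c τ - 1) = 0 := by linarith
    rcases mul_eq_zero.1 this with h | h
    · exact Or.inl h
    · exact Or.inr (by linarith)
  rcases hcase with h | h
  · left
    have h' : c τ' = 0 := by rw [h] at k3; linarith
    have hc0 : c = 0 := by
      ext i
      by_cases h1 : i = τ
      · rw [h1, h]; rfl
      · by_cases h2 : i = τ'
        · rw [h2, h']; rfl
        · exact hother i h1 h2
    rw [hD, hc0]
    simp
  · right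
    have h' : c τ' = -1 := by rw [h] at k3; linarith
    ext i j
    rw [hD, Matrix.add_apply, vecMulVec_apply, PEquiv.toMatrix_apply, one_apply]
    simp only [Equiv.toPEquiv_apply, Option.mem_def, Option.some.injEq]
    by_cases h1 : i = τ
    · subst h1
      rw [Equiv.swap_apply_left, h]
      unfold alphaVec
      push_cast
      grind
    · by_cases h2 : i = τ'
      · subst h2
        rw [Equiv.swap_apply_right, h']
        unfold alphaVec
        push_cast
        grind
      · rw [Equiv.swap_apply_of_ne_of_ne h1 h2, hother i h1 h2]
        simp

/-- for an almost controllable graph with a pair of twins and a generalized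
cospectral mate `H`, any two rational regular orthogonal matrices carrying `A(G)` to
`A(H)` have the same level. -/
theorem level_eq_of_twins
    (n : ℕ) (A B : Matrix (Fin (n + 2)) (Fin (n + 2)) ℤ)
    (hA : A.IsAdjMatrix) (hB : B.IsAdjMatrix)
    (hac : IsAlmostControllable A)
    (τ τ' : Fin (n + 2)) (hne : τ ≠ τ') (htw : IsTwinPair A τ τ')
    (hgc : GenCospectral A B)
    (Q₁ Q₂ : Matrix (Fin (n + 2)) (Fin (n + 2)) ℚ)
    (hQ₁ : IsRegularOrthogonal Q₁) (hQ₂ : IsRegularOrthogonal Q₂)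
    (h₁ : Q₁ᵀ * A.map ((↑) : ℤ → ℚ) * Q₁ = B.map ((↑) : ℤ → ℚ))
    (h₂ : Q₂ᵀ * A.map ((↑) : ℤ → ℚ) * Q₂ = B.map ((↑) : ℤ → ℚ)) :
    level Q₁ = level Q₂ := by
  have hQ₁' : Q₁ * Q₁ᵀ = 1 := mul_eq_one_comm.1 hQ₁.1
  have hQ₂' : Q₂ * Q₂ᵀ = 1 := mul_eq_one_comm.1 hQ₂.1
  have hR : (Q₁ * Q₂ᵀ) * (Q₁ * Q₂ᵀ)ᵀ = 1 := by
    rw [transpose_mul, transpose_transpose, Matrix.mul_assoc, ← Matrix.mul_assoc Q₂ᵀ, hQ₂.1,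
      Matrix.one_mul, hQ₁']
  have hRe : (Q₁ * Q₂ᵀ) *ᵥ (fun _ => (1 : ℚ)) = fun _ => 1 := by
    have h : Q₂ᵀ *ᵥ (fun _ => (1 : ℚ)) = fun _ => 1 := by
      conv_lhs => rw [← hQ₂.2]
      rw [mulVec_mulVec, hQ₂.1, one_mulVec]
    rw [← mulVec_mulVec, h, hQ₁.2]
  have hcomm : (Q₁ * Q₂ᵀ) * A.map ((↑) : ℤ → ℚ) = A.map ((↑) : ℤ → ℚ) * (Q₁ * Q₂ᵀ) := by
    have e1 : A.map ((↑) : ℤ → ℚ) * Q₁ = Q₁ * B.map ((↑) : ℤ → ℚ) := by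
      rw [← h₁, ← Matrix.mul_assoc, ← Matrix.mul_assoc, hQ₁', Matrix.one_mul]
    have e2 : Q₂ᵀ * A.map ((↑) : ℤ → ℚ) = B.map ((↑) : ℤ → ℚ) * Q₂ᵀ := by
      rw [← h₂, Matrix.mul_assoc _ Q₂, hQ₂', Matrix.mul_one]
    rw [Matrix.mul_assoc, e2, ← Matrix.mul_assoc, ← e1, Matrix.mul_assoc]
  have hQ : Q₁ = (Q₁ * Q₂ᵀ) * Q₂ := by rw [Matrix.mul_assoc, hQ₂.1, Matrix.mul_one]
  rcases commuting_eq A hac τ τ' hne htw _ hR hRe hcomm with h | h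
  · rw [h, Matrix.one_mul] at hQ
    rw [hQ]
  · rw [h, PEquiv.toMatrix_toPEquiv_mul] at hQ
    exact level_perm Q₁ Q₂ (Equiv.swap τ τ') fun i j => by rw [hQ]; rfl

end AlmostControllableGraphs
end

section
/- Let n ≥ 2 and let G be an almost controllable graph on Fin n having a pair of twins τ ≠ τ′. Then G is DGS if and only if every rational regular orthogonal n×n matrix Q such that Qᵀ·A(G)·Q is the adjacency matrix of some graph (i.e., a symmetric 0–1 matrix with zero diagonal) is a permutation matrix. -/
/-!
The equivalence rests on the basis formed by the walk vectors `Aᵏe` and one further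
vector. Write `e = 1` for the all-ones vector, `J = eeᵀ` and `N = n + 2` for the number of vertices.
Almost controllability makes `e, Ae, …, A^{N-2}e` linearly independent (`extMat_det_ne_zero`), and
the twins provide `x = e_{τ'} - e_τ`, which is orthogonal to every `Aᵏe` (`twin_facts`). So
`extMat A x = [e, Ae, …, A^{N-2}e, x]` is invertible.

*DGS implies that every `Q` is a permutation matrix.* If `QᵀAQ` is the adjacency matrix of a graph
`H`, then `H` is generalized cospectral with `G`, because `QᵀJQ = J`. Hence `H ≅ G` and, after
multiplying `Q` by a permutation matrix `P`, the regular orthogonal matrix `R = QP` commutes with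
`A`. It fixes all `Aᵏe`, so it maps the line spanned by `x` to itself isometrically and `Rx = ±x`
(`mulVec_perp_eq`). As `R` is determined by `Rx` (`extMat_cancel`), it is the identity or the
permutation matrix of the transposition `(τ τ')`.

*Conversely*, let `B` be generalized cospectral with `A`. The polynomials
`(Aᵏe)ᵀ adj(X - A) e` have degree below `N`, and the one for `k = 0` is
`det(X - A + J) - det(X - A)`, which is determined by the generalized spectrum. The relation
`(X - A) adj(X - A) = det(X - A)` then yields all the walk counts `eᵀAᵏe` recursively, so that
`eᵀAᵏe = eᵀBᵏe` (`walk_count_eq`). Therefore the Gram matrices of the walk vectors of `A` and `B`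
agree; in particular some `y ≠ 0` is orthogonal to the walk vectors of `B`. Comparing determinants
of the Gram matrices of `[e, …, A^{N-2}e, x]` and `[e, …, B^{N-2}e, y]` shows that
`(x·x)/(y·y)` is the square of a rational number, so `y` can be rescaled over `ℚ` to the
length of `x`. The rational matrix `Q = extMat A x * (extMat B y)⁻¹` is then regular orthogonal,
and `QᵀAQ - B` is a multiple `c wwᵀ` of a rank-one matrix with `w ≠ 0`; since it has trace zero,
`c = 0` and `QᵀAQ = B` (`exists_regular_orthogonal`). By assumption `Q` is a permutation matrix,
so the two graphs are isomorphic.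
-/

open Matrix

namespace AlmostControllableGraphs

variable {n : ℕ}

open Polynomial

/-! ### Walk counts from the generalized spectrum -/

theorem det_add_vecMulVec_field {K ι : Type*} [Field K] [Fintype ι] [DecidableEq ι]
    (M : Matrix ι ι K) (hM : M.det ≠ 0) (u v : ι → K) :
    (M + vecMulVec u v).det = M.det + v ⬝ᵥ (M.adjugate *ᵥ u) := by
  have h := det_add_replicateCol_mul_replicateRow (ι := Unit) (isUnit_iff_ne_zero.mpr hM) u v
  have : replicateRow Unit v * M⁻¹ * replicateCol Unit u
      = of fun _ _ => v ⬝ᵥ (M⁻¹ *ᵥ u) := by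
    ext i j
    rw [Matrix.mul_assoc, ← replicateCol_mulVec]
    rfl
  rw [vecMulVec_eq Unit, h, this, det_unique (n := Unit)]
  simp only [Matrix.add_apply, one_apply_eq, of_apply]
  rw [mul_add, mul_one, inv_def, smul_mulVec, dotProduct_smul, smul_eq_mul, Ring.inverse_eq_inv', mul_inv_cancel_left₀ hM]

/-- The matrix determinant lemma in adjugate form; over `K[X]` it applies to characteristic matrices,
which are not invertible. -/
theorem det_add_vecMulVec {R ι : Type*} [CommRing R] [IsDomain R] [Fintype ι] [DecidableEq ι]
    (M : Matrix ι ι R) (hM : M.det ≠ 0) (u v : ι → R) :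
    (M + vecMulVec u v).det = M.det + v ⬝ᵥ (M.adjugate *ᵥ u) := by
  have hinj := IsFractionRing.injective R (FractionRing R)
  set f := algebraMap R (FractionRing R) with hf
  apply hinj
  have hd : (f.mapMatrix M).det ≠ 0 := by
    rw [← RingHom.map_det]
    exact fun h => hM (hinj (by rw [h, map_zero]))
  have h := det_add_vecMulVec_field (f.mapMatrix M) hd (f ∘ u) (f ∘ v)
  have h1 : f.mapMatrix M + vecMulVec (f ∘ u) (f ∘ v) = f.mapMatrix (M + vecMulVec u v) := by
    ext i j; simp [vecMulVec]
  rw [h1, ← RingHom.map_det, ← RingHom.map_det, ← RingHom.map_adjugate] at h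
  rw [h, map_add]
  congr 1
  simp [dotProduct, mulVec, map_sum]

theorem charpoly_sub_vecMulVec {K ι : Type*} [Field K] [Fintype ι] [DecidableEq ι]
    (a : Matrix ι ι K) (u v : ι → K) :
    (a - vecMulVec u v).charpoly = a.charpoly +
      (fun i => C (v i)) ⬝ᵥ (a.charmatrix.adjugate *ᵥ fun i => C (u i)) := by
  rw [Matrix.charpoly, Matrix.charpoly, ← det_add_vecMulVec _ a.charpoly_monic.ne_zero]
  congr 1
  ext1 i j
  simp [charmatrix, vecMulVec]
  ring

theorem charpoly_neg' {R ι : Type*} [CommRing R] [Fintype ι] [DecidableEq ι]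
    (a : Matrix ι ι R) :
    (-a).charpoly = (-1) ^ Fintype.card ι * a.charpoly.comp (-X) := by
  have h1 : a.charpoly.comp (-X) = (-(-a).charmatrix).det := by
    rw [Matrix.charpoly, ← coe_compRingHom_apply, RingHom.map_det]
    congr 1
    ext1 i j
    by_cases h : i = j <;> simp [charmatrix, h] 
    ring
  rw [h1, det_neg, ← mul_assoc, ← mul_pow]
  simp [Matrix.charpoly]

/-- The polynomial `(aᵏe)ᵀ adj(X - a) e`, the numerator of the generating function of the walk
counts `eᵀa^{k+m}e`, `m ≥ 0`. -/
noncomputable def walkPoly {K ι : Type*} [Field K] [Fintype ι] [DecidableEq ι]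
    (a : Matrix ι ι K) (k : ℕ) : K[X] :=
  (fun i => C ((a ^ k *ᵥ 1) i)) ⬝ᵥ (a.charmatrix.adjugate *ᵥ fun _ => 1)

/-- By the determinant lemma, `walkPoly a k` is a difference of two monic characteristic polynomials
of the same degree. -/
theorem walkPoly_degree {K ι : Type*} [Field K] [Fintype ι] [DecidableEq ι] 
    (a : Matrix ι ι K) (k : ℕ) : (walkPoly a k).degree < Fintype.card ι := by
  have h := charpoly_sub_vecMulVec a 1 (a ^ k *ᵥ 1)
  have h2 : walkPoly a k = (a - vecMulVec 1 (a ^ k *ᵥ 1)).charpoly - a.charpoly := by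
    rw [h]; simp [walkPoly]
  rw [h2, ← charpoly_degree_eq_dim (a - vecMulVec 1 (a ^ k *ᵥ 1))]
  apply degree_sub_lt_left
  · simp [charpoly_degree_eq_dim]
  · exact (charpoly_monic _).ne_zero
  · rw [(charpoly_monic _).leadingCoeff, (charpoly_monic _).leadingCoeff]

/-- Comparing coefficients of degree `card ι` here expresses the `k`-th walk count through
`walkPoly a k`, and then `walkPoly a (k + 1)` through both. -/
theorem walkPoly_succ {K ι : Type*} [Field K] [Fintype ι] [DecidableEq ι] 
    (a : Matrix ι ι K) (ha : a.IsSymm) (k : ℕ) :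
    X * walkPoly a k - walkPoly a (k + 1) = a.charpoly * C (1 ⬝ᵥ (a ^ k *ᵥ 1)) := by
  have h := a.charmatrix.mul_adjugate
  have h3 : (fun i => C ((a ^ (k+1) *ᵥ 1) i)) = (C.mapMatrix a) *ᵥ (fun i => C ((a ^ k *ᵥ 1) i)) := by
    funext i
    rw [pow_succ', ← mulVec_mulVec]
    simp [mulVec, dotProduct, map_sum]
  have hs : (C.mapMatrix a)ᵀ = C.mapMatrix a := by
    rw [RingHom.mapMatrix_apply, ← transpose_map, ha.eq]
  rw [walkPoly, walkPoly, h3, ← hs, mulVec_transpose, ← dotProduct_mulVec, mulVec_mulVec]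
  have h4 : C.mapMatrix a * a.charmatrix.adjugate = (X : K[X]) • a.charmatrix.adjugate - a.charpoly • (1 : Matrix ι ι K[X]) := by
    rw [Matrix.charpoly, ← h, charmatrix, sub_mul]
    simp [Matrix.scalar_apply]
    rw [← smul_eq_diagonal_mul, sub_sub_cancel]
  rw [h4, sub_mulVec, dotProduct_sub, smul_mulVec, smul_mulVec, dotProduct_smul, dotProduct_smul,
    one_mulVec]
  simp [dotProduct, map_sum]

/-- The characteristic polynomials of `a` and `a - J` determine all the walk counts `eᵀaᵏe`. -/
theorem walk_count_eq {K ι : Type*} [Field K] [Fintype ι] [DecidableEq ι]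
    (a b : Matrix ι ι K) (ha : a.IsSymm) (hb : b.IsSymm) (h : a.charpoly = b.charpoly)
    (h' : (a - vecMulVec 1 1).charpoly = (b - vecMulVec 1 1).charpoly) (k : ℕ) :
    (1 : ι → K) ⬝ᵥ (a ^ k *ᵥ 1) = 1 ⬝ᵥ (b ^ k *ᵥ 1) := by
  have hc : ∀ (c : Matrix ι ι K), c.IsSymm → ∀ k, (1 : ι → K) ⬝ᵥ (c ^ k *ᵥ 1) =
      (X * walkPoly c k).coeff (Fintype.card ι) := by
    intro c hc k
    have := congrArg (fun p => coeff p (Fintype.card ι)) (walkPoly_succ c hc k)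
    simp only [coeff_sub, coeff_mul_C] at this
    rw [coeff_eq_zero_of_degree_lt (walkPoly_degree c (k+1)), sub_zero] at this
    rw [this, ← charpoly_natDegree_eq_dim c, coeff_natDegree, (charpoly_monic c).leadingCoeff,
      one_mul]
  have hp : ∀ k, walkPoly a k = walkPoly b k := by
    intro k
    induction k with
    | zero =>
      have h1 := charpoly_sub_vecMulVec a 1 1
      have h2 := charpoly_sub_vecMulVec b 1 1
      rw [h', h2, h] at h1
      simpa [walkPoly] using (add_left_cancel h1).symm
    | succ k ih =>
      have h1 := walkPoly_succ a ha k
      have h2 := walkPoly_succ b hb k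
      rw [hc a ha, ih, h, ← hc b hb, ← h2] at h1
      exact sub_right_injective h1
  rw [hc a ha, hc b hb, hp]

/-! ### The walk vectors completed to a basis -/

theorem pow_isSymm {ι : Type*} [Fintype ι] [DecidableEq ι] {a : Matrix ι ι ℚ} (ha : a.IsSymm)
    (k : ℕ) : (a ^ k).IsSymm := by
  rw [Matrix.IsSymm, transpose_pow, ha.eq]

theorem walk_dot_walk {ι : Type*} [Fintype ι] [DecidableEq ι] {a : Matrix ι ι ℚ} (ha : a.IsSymm)
    (j k : ℕ) : (a ^ j *ᵥ 1) ⬝ᵥ (a ^ k *ᵥ 1) = 1 ⬝ᵥ (a ^ (j + k) *ᵥ 1) := by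
  rw [pow_add, ← mulVec_mulVec, dotProduct_mulVec 1, ← mulVec_transpose, (pow_isSymm ha j).eq]


/-- If `p(a)e = 0` then reduction modulo `p` places all the walk vectors in the span of the first
`deg p` of them. -/
theorem rank_walk_le (a : Matrix (Fin (n + 2)) (Fin (n + 2)) ℚ) (p : ℚ[X]) (hp : p ≠ 0)
    (hd : p.natDegree ≤ n) (h : aeval a p *ᵥ 1 = 0) :
    (of fun i (j : Fin (n + 2)) => (a ^ (j : ℕ) *ᵥ 1) i).rank ≤ n := by
  set S := Submodule.span ℚ (Set.range fun i : Fin n => a ^ (i : ℕ) *ᵥ (1 : Fin (n + 2) → ℚ)) with hS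
  have hmem : ∀ k : ℕ, a ^ k *ᵥ (1 : Fin (n + 2) → ℚ) ∈ S := by
    intro k
    have h1 : a ^ k *ᵥ (1 : Fin (n + 2) → ℚ) = aeval a (X ^ k % p) *ᵥ 1 := by
      conv_lhs => rw [show a ^ k = aeval a (X ^ k : ℚ[X]) by simp,
        ← EuclideanDomain.div_add_mod (X ^ k : ℚ[X]) p, mul_comm, map_add, map_mul, add_mulVec,
        ← mulVec_mulVec, h, mulVec_zero, zero_add]
    have hlt : ∀ i ∈ (X ^ k % p : ℚ[X]).support, i < n := by
      intro i hi
      have := le_degree_of_mem_supp i hi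
      have h2 := this.trans_lt (degree_mod_lt (X ^ k) hp)
      rw [degree_eq_natDegree hp] at h2
      exact (Nat.cast_lt.mp h2).trans_le hd
    rw [h1, aeval_eq_sum_range, ← Finset.sum_subset (supp_subset_range_natDegree_succ), sum_mulVec]
    · refine Submodule.sum_mem _ fun i hi => ?_
      rw [smul_mulVec]
      exact S.smul_mem _ (Submodule.subset_span ⟨⟨i, hlt i hi⟩, rfl⟩)
    · intro i _ hi
      rw [notMem_support_iff.mp hi, zero_smul]
  rw [rank_eq_finrank_span_cols]
  calc _ ≤ Module.finrank ℚ S := by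
        apply Submodule.finrank_mono
        rw [Submodule.span_le]
        rintro _ ⟨j, rfl⟩
        exact hmem j
    _ ≤ n := by
        have := finrank_range_le_card (R := ℚ) fun i : Fin n => a ^ (i : ℕ) *ᵥ (1 : Fin (n + 2) → ℚ)
        simpa [Set.finrank] using this

/-- The `j`-th column of the matrix `[e, ae, …, aⁿe, x]`. -/
def extCol (a : Matrix (Fin (n + 2)) (Fin (n + 2)) ℚ) (x : Fin (n + 2) → ℚ) (j : Fin (n + 2)) :
    Fin (n + 2) → ℚ :=
  if j = Fin.last (n + 1) then x else a ^ (j : ℕ) *ᵥ 1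

/-- The square matrix `[e, ae, …, aⁿe, x]`, of size `n + 2`. -/
def extMat (a : Matrix (Fin (n + 2)) (Fin (n + 2)) ℚ) (x : Fin (n + 2) → ℚ) :
    Matrix (Fin (n + 2)) (Fin (n + 2)) ℚ :=
  of fun i j => extCol a x j i

/-- `x` is orthogonal to the columns `e, ae, …, a^{n+1}e` of the walk matrix. -/
def WalkPerp (a : Matrix (Fin (n + 2)) (Fin (n + 2)) ℚ) (x : Fin (n + 2) → ℚ) : Prop :=
  ∀ k ≤ n + 1, x ⬝ᵥ (a ^ k *ᵥ 1) = 0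

theorem extMat_mul_col (a R : Matrix (Fin (n + 2)) (Fin (n + 2)) ℚ) (x : Fin (n + 2) → ℚ)
    (i j) : (R * extMat a x) i j = (R *ᵥ extCol a x j) i := rfl

theorem gram_apply (a : Matrix (Fin (n + 2)) (Fin (n + 2)) ℚ) (x : Fin (n + 2) → ℚ) (j k) :
    ((extMat a x)ᵀ * extMat a x) j k = extCol a x j ⬝ᵥ extCol a x k := rfl

theorem gramA_apply (a : Matrix (Fin (n + 2)) (Fin (n + 2)) ℚ) (x : Fin (n + 2) → ℚ) (j k) :
    ((extMat a x)ᵀ * a * extMat a x) j k = extCol a x j ⬝ᵥ (a *ᵥ extCol a x k) := by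
  rw [Matrix.mul_assoc]; rfl

theorem extMat_det_ne_zero (a : Matrix (Fin (n + 2)) (Fin (n + 2)) ℚ) (x : Fin (n + 2) → ℚ)
    (hr : (of fun i (j : Fin (n + 2)) => (a ^ (j : ℕ) *ᵥ 1) i).rank = n + 1)
    (hx : x ≠ 0) (hp : WalkPerp a x) : (extMat a x).det ≠ 0 := by
  intro h0
  obtain ⟨y, hy, hMy⟩ := exists_mulVec_eq_zero_iff.mpr h0
  have hsum : ∑ j, y j • extCol a x j = 0 := by
    rw [← hMy]
    funext i
    simp [mulVec, dotProduct, extMat, mul_comm]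
  rw [Fin.sum_univ_castSucc] at hsum
  have hc : ∀ j : Fin (n + 1), extCol a x j.castSucc = a ^ (j : ℕ) *ᵥ 1 := by
    intro j; simp [extCol, Fin.castSucc_ne_last]
  have hl : extCol a x (Fin.last _) = x := by simp [extCol]
  simp only [hc, hl] at hsum
  have hyl : y (Fin.last _) = 0 := by
    have := congrArg (fun v => x ⬝ᵥ v) hsum
    simp only [dotProduct_add, dotProduct_sum, dotProduct_smul, dotProduct_zero] at this
    rw [Finset.sum_eq_zero, zero_add] at this
    · exact (mul_eq_zero.mp this).resolve_right fun h => hx (dotProduct_self_eq_zero.mp h)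
    · intro j _
      rw [hp j (by omega), smul_zero]
  rw [hyl, zero_smul, add_zero] at hsum
  set p : ℚ[X] := ∑ j : Fin (n + 1), C (y j.castSucc) * X ^ (j : ℕ) with hpdef
  have hp0 : p ≠ 0 := by
    intro hp0
    apply hy
    funext j
    refine Fin.lastCases hyl (fun j => ?_) j
    have := congrArg (fun q => coeff q (j : ℕ)) hp0
    simpa [hpdef, finsetSum_coeff, coeff_C_mul, coeff_X_pow, Fin.val_inj] using this
  have hpd : p.natDegree ≤ n := by
    apply natDegree_sum_le_of_forall_le
    intro j _
    exact (natDegree_C_mul_X_pow_le _ _).trans (by omega)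
  have := rank_walk_le a p hp0 hpd (by
    rw [← hsum, hpdef, map_sum, sum_mulVec]
    refine Finset.sum_congr rfl fun j _ => ?_
    rw [map_mul, map_pow, aeval_X, aeval_C, Algebra.algebraMap_eq_smul_one, smul_mul_assoc, one_mul,
      smul_mulVec])
  omega

/-- Walk counts determine the Gram matrix of `[e, ae, …, aⁿe, x]` up to the entry `x·x`. The scaling
is written as a diagonal factor so that determinants can be taken directly. -/
theorem gram_eq {a b : Matrix (Fin (n + 2)) (Fin (n + 2)) ℚ} (ha : a.IsSymm) (hb : b.IsSymm)
    (hw : ∀ k, (1 : Fin (n + 2) → ℚ) ⬝ᵥ (a ^ k *ᵥ 1) = 1 ⬝ᵥ (b ^ k *ᵥ 1))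
    {x y : Fin (n + 2) → ℚ} (hx : WalkPerp a x) (hy : WalkPerp b y) (r : ℚ)
    (hxy : x ⬝ᵥ x = (y ⬝ᵥ y) * r) :
    (extMat a x)ᵀ * extMat a x = (extMat b y)ᵀ * extMat b y *
      diagonal (fun j => if j = Fin.last (n + 1) then r else 1) := by
  ext j k
  rw [mul_diagonal, gram_apply, gram_apply]
  unfold extCol
  split_ifs with h1 h2 h2
  · exact hxy
  · rw [hx _ (by omega), hy _ (by omega), mul_one]
  · rw [dotProduct_comm, hx _ (by omega), dotProduct_comm, hy _ (by omega), zero_mul]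
  · rw [walk_dot_walk ha, walk_dot_walk hb, hw, mul_one]

/-- Walk counts determine the matrix of the bilinear form of `a` in the basis `e, ae, …, aⁿe, x` up to
its last diagonal entry. -/
theorem gramA_sub {a b : Matrix (Fin (n + 2)) (Fin (n + 2)) ℚ} (ha : a.IsSymm) (hb : b.IsSymm)
    (hw : ∀ k, (1 : Fin (n + 2) → ℚ) ⬝ᵥ (a ^ k *ᵥ 1) = 1 ⬝ᵥ (b ^ k *ᵥ 1))
    {x y : Fin (n + 2) → ℚ} (hx : WalkPerp a x) (hy : WalkPerp b y) :
    (extMat a x)ᵀ * a * extMat a x - (extMat b y)ᵀ * b * extMat b y =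
      Matrix.single (Fin.last (n + 1)) (Fin.last (n + 1)) (x ⬝ᵥ (a *ᵥ x) - y ⬝ᵥ (b *ᵥ y)) := by
  have hk : ∀ k : Fin (n + 2), k ≠ Fin.last (n + 1) → (k : ℕ) + 1 ≤ n + 1 := fun k hk => by
    have := Fin.val_lt_last hk
    simpa using this
  have hsym : ∀ (c : Matrix (Fin (n + 2)) (Fin (n + 2)) ℚ), c.IsSymm → ∀ v w : Fin (n + 2) → ℚ,
      v ⬝ᵥ (c *ᵥ w) = w ⬝ᵥ (c *ᵥ v) := by
    intro c hc v w
    rw [dotProduct_mulVec, ← mulVec_transpose, hc.eq, dotProduct_comm]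
  ext j k
  rw [Matrix.sub_apply, gramA_apply, gramA_apply, Matrix.single_apply]
  unfold extCol
  split_ifs with h1 h2 h2 h3 h3 h3
  all_goals first | rfl | (exfalso; tauto) | skip
  · rw [mulVec_mulVec, mulVec_mulVec, ← pow_succ', ← pow_succ', hx _ (hk _ h2), hy _ (hk _ h2),
      sub_zero]
  · rw [hsym a ha, hsym b hb, mulVec_mulVec, mulVec_mulVec, ← pow_succ', ← pow_succ',
      hx _ (hk _ h1), hy _ (hk _ h1), sub_zero]
  · rw [mulVec_mulVec, mulVec_mulVec, ← pow_succ', ← pow_succ', walk_dot_walk ha, walk_dot_walk hb,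
      hw, sub_self]

/-- Symmetric matrices with equal walk counts and equal traces are conjugate by a rational regular
orthogonal matrix, provided the walk space has codimension one. -/
theorem exists_regular_orthogonal {a b : Matrix (Fin (n + 2)) (Fin (n + 2)) ℚ}
    (ha : a.IsSymm) (hb : b.IsSymm) (htr : a.trace = b.trace)
    (hw : ∀ k, (1 : Fin (n + 2) → ℚ) ⬝ᵥ (a ^ k *ᵥ 1) = 1 ⬝ᵥ (b ^ k *ᵥ 1))
    {x y : Fin (n + 2) → ℚ} (hx : WalkPerp a x) (hdet : (extMat a x).det ≠ 0)
    (hy : WalkPerp b y) (hy0 : y ≠ 0) :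
    ∃ Q : Matrix (Fin (n + 2)) (Fin (n + 2)) ℚ, Qᵀ * Q = 1 ∧ Q *ᵥ 1 = 1 ∧ Qᵀ * a * Q = b := by
  have hyy : y ⬝ᵥ y ≠ 0 := fun h => hy0 (dotProduct_self_eq_zero.mp h)
  obtain ⟨z, hz, hzz⟩ : ∃ z, WalkPerp b z ∧ x ⬝ᵥ x = z ⬝ᵥ z := by
    have h1 := congrArg Matrix.det
      (gram_eq ha hb hw hx hy ((x ⬝ᵥ x) / (y ⬝ᵥ y)) (by field_simp))
    simp only [det_mul, det_transpose, det_diagonal, Fin.prod_univ_castSucc,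
      Fin.castSucc_ne_last, if_false, if_true, Finset.prod_const_one, one_mul] at h1
    have h2 : (extMat b y).det ≠ 0 := fun h => by
      rw [h, zero_mul, zero_mul] at h1
      exact hdet (mul_self_eq_zero.mp h1)
    -- `h1` reads `(det P)² = (det S)² (x·x)/(y·y)`, so this scalar turns `y·y` into `x·x`.
    refine ⟨((extMat a x).det / (extMat b y).det) • y, fun k hk => ?_, ?_⟩
    · rw [smul_dotProduct, hy k hk, smul_zero]
    · simp only [smul_dotProduct, dotProduct_smul, smul_eq_mul]
      field_simp at h1 ⊢
      linarith
  have hg := gram_eq ha hb hw hx hz 1 (by rw [hzz, mul_one])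
  have hg' : (extMat a x)ᵀ * extMat a x = (extMat b z)ᵀ * extMat b z := by
    simpa using hg
  have hdz : IsUnit (extMat b z).det := by
    have h1 := congrArg Matrix.det hg'
    simp only [det_mul, det_transpose] at h1
    refine isUnit_iff_ne_zero.mpr fun h => ?_
    rw [h, zero_mul] at h1
    exact hdet (mul_self_eq_zero.mp h1)
  set P := extMat a x with hP
  set S := extMat b z with hS
  have hSS : S * S⁻¹ = 1 := mul_nonsing_inv _ hdz
  have hSS' : S⁻¹ * S = 1 := nonsing_inv_mul _ hdz
  have hST : (S⁻¹)ᵀ * Sᵀ = 1 := by rw [← transpose_mul, hSS, transpose_one]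
  have hQ : (P * S⁻¹)ᵀ * (P * S⁻¹) = 1 := by
    calc (P * S⁻¹)ᵀ * (P * S⁻¹) = (S⁻¹)ᵀ * (Pᵀ * P) * S⁻¹ := by
          rw [transpose_mul]; simp only [Matrix.mul_assoc]
      _ = ((S⁻¹)ᵀ * Sᵀ) * (S * S⁻¹) := by rw [hg']; simp only [Matrix.mul_assoc]
      _ = 1 := by rw [hSS, hST, one_mul]
  refine ⟨P * S⁻¹, hQ, ?_, ?_⟩
  · have h0 : ∀ (c : Matrix (Fin (n + 2)) (Fin (n + 2)) ℚ) v,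
        extMat c v *ᵥ Pi.single 0 1 = 1 := by
      intro c v
      funext i
      have : (0 : Fin (n + 2)) ≠ Fin.last (n + 1) := (Fin.last_pos).ne
      simp [extMat, extCol, this]
    have h1 : S⁻¹ *ᵥ (1 : Fin (n + 2) → ℚ) = Pi.single 0 1 := by
      rw [← h0 b z, mulVec_mulVec, ← hS, hSS', one_mulVec]
    rw [← mulVec_mulVec, h1, hP, h0]
  · set c := x ⬝ᵥ (a *ᵥ x) - z ⬝ᵥ (b *ᵥ z) with hc
    have hd := gramA_sub ha hb hw hx hz
    rw [← hP, ← hS, ← hc] at hd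
    have hE : (P * S⁻¹)ᵀ * a * (P * S⁻¹) - b =
        (S⁻¹)ᵀ * Matrix.single (Fin.last (n + 1)) (Fin.last (n + 1)) c * S⁻¹ := by
      rw [← hd]
      have : b = ((S⁻¹)ᵀ * Sᵀ) * b * (S * S⁻¹) := by rw [hSS, hST, one_mul, mul_one]
      conv_lhs => rw [this]
      rw [transpose_mul]
      simp only [Matrix.mul_assoc, Matrix.mul_sub, Matrix.sub_mul]
    have htrE := congrArg Matrix.trace hE
    -- The trace of the right-hand side of `hE` is `c` times the squared norm of the last row of `S⁻¹`.
    have hc0 : c = 0 := by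
      rw [trace_sub, trace_mul_comm, ← Matrix.mul_assoc, mul_eq_one_comm.mp hQ, one_mul, htr,
        sub_self, Matrix.mul_assoc, trace_mul_comm, Matrix.mul_assoc, trace_single_mul] at htrE
      refine (mul_eq_zero.mp (by simpa using htrE.symm)).resolve_right fun h => ?_
      have hrow : (S⁻¹) (Fin.last (n + 1)) = 0 := dotProduct_self_eq_zero.mp h
      have := congrFun (congrFun hSS' (Fin.last (n + 1))) (Fin.last (n + 1))
      rw [Matrix.mul_apply] at this
      simp [hrow] at this
    rw [hc0, Matrix.single_zero, Matrix.mul_zero, Matrix.zero_mul] at hE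
    exact sub_eq_zero.mp hE

/-! ### Regular orthogonal matrices commuting with the adjacency matrix -/

theorem commute_fixes_walk {ι : Type*} [Fintype ι] [DecidableEq ι] {a R : Matrix ι ι ℚ}
    (h : R * a = a * R) (h1 : R *ᵥ 1 = 1) (k : ℕ) : R *ᵥ (a ^ k *ᵥ 1) = a ^ k *ᵥ 1 := by
  have : R * a ^ k = a ^ k * R := (show Commute R a from h).pow_right k
  rw [mulVec_mulVec, this, ← mulVec_mulVec, h1]

theorem permMatrix_apply_eq (σ : Equiv.Perm (Fin (n + 2))) (i j) :
    σ.permMatrix ℚ i j = if σ i = j then 1 else 0 := by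
  simp [Equiv.Perm.permMatrix, PEquiv.toMatrix_apply, Equiv.toPEquiv_apply, eq_comm]

theorem permMatrix_conj (σ : Equiv.Perm (Fin (n + 2))) (a : Matrix (Fin (n + 2)) (Fin (n + 2)) ℚ) :
    σ.permMatrix ℚ * a * (σ.permMatrix ℚ)ᵀ = a.submatrix σ σ := by
  ext i j
  simp [Matrix.mul_apply, Equiv.symm_apply_eq]

theorem permMatrix_transpose_mul (σ : Equiv.Perm (Fin (n + 2))) :
    (σ.permMatrix ℚ)ᵀ * σ.permMatrix ℚ = 1 := by
  rw [mul_eq_one_comm]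
  have := permMatrix_conj σ 1
  rwa [mul_one, submatrix_one_equiv] at this

/-- A matrix that commutes with `a` and fixes `e` is determined by its value at `x`. -/
theorem extMat_cancel {a R S : Matrix (Fin (n + 2)) (Fin (n + 2)) ℚ} {x : Fin (n + 2) → ℚ}
    (hdet : (extMat a x).det ≠ 0) (hR : R * a = a * R) (hR1 : R *ᵥ 1 = 1)
    (hS : S * a = a * S) (hS1 : S *ᵥ 1 = 1) (hx : R *ᵥ x = S *ᵥ x) : R = S := by
  have hu := isUnit_iff_ne_zero.mpr hdet
  refine (Matrix.isUnit_iff_isUnit_det _).mpr hu |>.mul_left_injective ?_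
  ext i j
  change (R * extMat a x) i j = (S * extMat a x) i j
  rw [extMat_mul_col, extMat_mul_col]
  refine congrFun ?_ i
  unfold extCol
  split_ifs
  · exact hx
  · rw [commute_fixes_walk hR hR1, commute_fixes_walk hS hS1]

/-- A regular orthogonal matrix commuting with `a` preserves the orthogonal complement of the walk
space, which is the line spanned by `x`. -/
theorem mulVec_perp_eq {a R : Matrix (Fin (n + 2)) (Fin (n + 2)) ℚ} {x : Fin (n + 2) → ℚ}
    (hx : WalkPerp a x) (hdet : (extMat a x).det ≠ 0) (hRR : Rᵀ * R = 1) (hR : R * a = a * R)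
    (hR1 : R *ᵥ 1 = 1) : R *ᵥ x = x ∨ R *ᵥ x = -x := by
  have hx0 : x ⬝ᵥ x ≠ 0 := by
    intro h
    refine hdet (exists_mulVec_eq_zero_iff.mp ⟨Pi.single (Fin.last _) 1, by simp, ?_⟩)
    funext i
    simp [extMat, extCol, dotProduct_self_eq_zero.mp h]
  have hiso : ∀ v w, (R *ᵥ v) ⬝ᵥ (R *ᵥ w) = v ⬝ᵥ w := by
    intro v w
    rw [dotProduct_mulVec, ← mulVec_transpose, mulVec_mulVec, hRR, one_mulVec]
  set c := ((R *ᵥ x) ⬝ᵥ x) / (x ⬝ᵥ x) with hc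
  have hz : R *ᵥ x - c • x = 0 := by
    by_contra hne
    refine hdet (exists_vecMul_eq_zero_iff.mp ⟨_, hne, ?_⟩)
    funext j
    change (R *ᵥ x - c • x) ⬝ᵥ extCol a x j = 0
    rw [sub_dotProduct, smul_dotProduct, smul_eq_mul]
    unfold extCol
    split_ifs
    · rw [hc]; field_simp; ring
    · rw [hx _ (by omega), mul_zero, sub_zero, ← commute_fixes_walk hR hR1, hiso, hx _ (by omega)]
  have hRx : R *ᵥ x = c • x := sub_eq_zero.mp hz
  have hcc : c * c = 1 := by
    have := hiso x x
    rw [hRx, smul_dotProduct, dotProduct_smul, smul_eq_mul, smul_eq_mul, ← mul_assoc] at this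
    exact mul_right_cancel₀ hx0 (by rw [this, one_mul])
  rcases mul_self_eq_one_iff.mp hcc with h | h <;> rw [hRx, h] <;> simp

/-- The transposition of a pair of twins commutes with `a`; it therefore fixes the walk vectors,
whose entries at the two twins must agree. -/
theorem twin_facts {a : Matrix (Fin (n + 2)) (Fin (n + 2)) ℚ} {τ τ' : Fin (n + 2)}
    (htw : ∀ i j, a (Equiv.swap τ τ' i) (Equiv.swap τ τ' j) = a i j) :
    (Equiv.swap τ τ').permMatrix ℚ * a = a * (Equiv.swap τ τ').permMatrix ℚ ∧
    WalkPerp a (Pi.single τ' 1 - Pi.single τ 1) := by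
  set s := Equiv.swap τ τ' with hs
  have h1 : s.permMatrix ℚ * a = a * s.permMatrix ℚ := by
    have h := permMatrix_conj s a
    have h' : a.submatrix s s = a := by ext i j; exact htw i j
    rw [h'] at h
    conv_rhs => rw [← h]
    rw [Matrix.mul_assoc _ (s.permMatrix ℚ)ᵀ, permMatrix_transpose_mul, mul_one]
  refine ⟨h1, fun k _ => ?_⟩
  have h2 := congrFun (commute_fixes_walk h1 (by rw [permMatrix_mulVec]; rfl) k) τ
  rw [permMatrix_mulVec, Function.comp_apply, hs, Equiv.swap_apply_left] at h2
  rw [sub_dotProduct, single_dotProduct, single_dotProduct, h2, sub_self]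

/-! ### Integer adjacency matrices and generalized cospectrality -/

theorem charpoly_conj {ι : Type*} [Fintype ι] [DecidableEq ι] {Q : Matrix ι ι ℚ}
    (hQ : Qᵀ * Q = 1) (a : Matrix ι ι ℚ) : (Qᵀ * a * Q).charpoly = a.charpoly := by
  rw [Matrix.charpoly_mul_comm, ← Matrix.mul_assoc, mul_eq_one_comm.mp hQ, one_mul]


theorem complMat_map {A : Matrix (Fin (n + 2)) (Fin (n + 2)) ℤ} (hA : ∀ i, A i i = 0) :
    (complMat A).map ((↑) : ℤ → ℚ) = vecMulVec 1 1 - 1 - A.map ((↑) : ℤ → ℚ) := by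
  ext i j
  by_cases h : i = j
  · subst h; simp [complMat, vecMulVec, hA]
  · simp [complMat, vecMulVec, h]

theorem charpoly_map_eq_iff (A B : Matrix (Fin (n + 2)) (Fin (n + 2)) ℤ) :
    (A.map ((↑) : ℤ → ℚ)).charpoly = (B.map ((↑) : ℤ → ℚ)).charpoly ↔ A.charpoly = B.charpoly := by
  have h := fun M : Matrix (Fin (n + 2)) (Fin (n + 2)) ℤ => Matrix.charpoly_map M (Int.castRingHom ℚ)
  simp only [Int.coe_castRingHom] at h
  rw [h, h]
  exact (Polynomial.map_injective _ Int.cast_injective).eq_iff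

/-- The complement has adjacency matrix `J - 1 - A`, so its spectrum determines that of `A - J` by a
shift and a change of sign. -/
theorem charpoly_sub_ones {A B : Matrix (Fin (n + 2)) (Fin (n + 2)) ℤ} (hA : ∀ i, A i i = 0)
    (hB : ∀ i, B i i = 0) (h : (complMat A).charpoly = (complMat B).charpoly) :
    (A.map ((↑) : ℤ → ℚ) - vecMulVec 1 1).charpoly =
      (B.map ((↑) : ℤ → ℚ) - vecMulVec 1 1).charpoly := by
  have key : ∀ M : Matrix (Fin (n + 2)) (Fin (n + 2)) ℤ, (∀ i, M i i = 0) →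
      M.map ((↑) : ℤ → ℚ) - vecMulVec 1 1 =
        -((complMat M).map ((↑) : ℤ → ℚ) - scalar (Fin (n + 2)) (-1 : ℚ)) := by
    intro M hM
    rw [complMat_map hM, map_neg, map_one]
    abel
  rw [key A hA, key B hB, charpoly_neg', charpoly_neg', Matrix.charpoly_sub_scalar,
    Matrix.charpoly_sub_scalar, (charpoly_map_eq_iff _ _).mpr h]

theorem walkMatrix_map (A : Matrix (Fin (n + 2)) (Fin (n + 2)) ℤ) :
    (walkMatrix A).map ((↑) : ℤ → ℚ) =
      of fun i (j : Fin (n + 2)) => ((A.map ((↑) : ℤ → ℚ)) ^ (j : ℕ) *ᵥ 1) i := by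
  ext i j
  have h := RingHom.map_mulVec (Int.castRingHom ℚ) (A ^ (j : ℕ)) (eVec (n + 2)) i
  have h2 := map_pow (Int.castRingHom ℚ).mapMatrix A (j : ℕ)
  simp only [RingHom.mapMatrix_apply, Int.coe_castRingHom] at h h2
  rw [h2] at h
  simp only [walkMatrix, map_apply, of_apply]
  have he : (fun z : ℤ => (z : ℚ)) ∘ eVec (n + 2) = 1 := by
    funext i
    simp [eVec]
  rw [h, he]

theorem isPermMatrix_permMatrix (σ : Equiv.Perm (Fin (n + 2))) : IsPermMatrix (σ.permMatrix ℚ) :=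
  ⟨σ, permMatrix_apply_eq σ⟩

theorem genCospectral_of_conj {A B : Matrix (Fin (n + 2)) (Fin (n + 2)) ℤ} (hA : ∀ i, A i i = 0)
    (hB : ∀ i, B i i = 0) {Q : Matrix (Fin (n + 2)) (Fin (n + 2)) ℚ} (hQ : Qᵀ * Q = 1)
    (hQ1 : Q *ᵥ 1 = 1) (h : Qᵀ * A.map ((↑) : ℤ → ℚ) * Q = B.map ((↑) : ℤ → ℚ)) :
    GenCospectral A B := by
  refine ⟨(charpoly_map_eq_iff _ _).mp ?_, (charpoly_map_eq_iff _ _).mp ?_⟩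
  · rw [← h, charpoly_conj hQ]
  · have hQt : Qᵀ *ᵥ (1 : Fin (n + 2) → ℚ) = 1 := by
      conv_lhs => rw [← hQ1]
      rw [mulVec_mulVec, hQ, one_mulVec]
    have hJ : Qᵀ * vecMulVec 1 1 * Q = vecMulVec 1 1 := by
      rw [mul_vecMulVec, vecMulVec_mul, hQt, ← mulVec_transpose, hQt]
    rw [complMat_map hA, complMat_map hB, ← h, ← charpoly_conj hQ (vecMulVec 1 1 - 1 - _)]
    rw [Matrix.mul_sub, Matrix.mul_sub, Matrix.sub_mul, Matrix.sub_mul, hJ, mul_one, hQ]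

theorem exists_int_adj {b : Matrix (Fin (n + 2)) (Fin (n + 2)) ℚ} (hb : b.IsAdjMatrix) :
    ∃ B : Matrix (Fin (n + 2)) (Fin (n + 2)) ℤ, B.IsAdjMatrix ∧ b = B.map ((↑) : ℤ → ℚ) := by
  refine ⟨of fun i j => if b i j = 1 then 1 else 0, ⟨fun i j => ?_, ?_, fun i => ?_⟩, ?_⟩
  · by_cases h : b i j = 1 <;> simp [h]
  · ext i j
    simp [hb.symm.apply i j]
  · simp [hb.apply_diag i]
  · ext i j
    rcases hb.zero_or_one i j with h | h <;> simp [h]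

theorem map_isSymm {A : Matrix (Fin (n + 2)) (Fin (n + 2)) ℤ} (hA : A.IsSymm) :
    (A.map ((↑) : ℤ → ℚ)).IsSymm := hA.map _

/-- Existence of a nonzero vector orthogonal to the walk vectors means that the determinant of the
walk matrix, hence of its Gram matrix, vanishes; the latter depends on the walk counts only. -/
theorem exists_walkPerp {a b : Matrix (Fin (n + 2)) (Fin (n + 2)) ℚ} (ha : a.IsSymm) (hb : b.IsSymm)
    (hw : ∀ k, (1 : Fin (n + 2) → ℚ) ⬝ᵥ (a ^ k *ᵥ 1) = 1 ⬝ᵥ (b ^ k *ᵥ 1))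
    {x : Fin (n + 2) → ℚ} (hx : WalkPerp a x) (hx0 : x ≠ 0) :
    ∃ y, WalkPerp b y ∧ y ≠ 0 := by
  set W : Matrix (Fin (n + 2)) (Fin (n + 2)) ℚ → Matrix (Fin (n + 2)) (Fin (n + 2)) ℚ :=
    fun c => of fun i j => (c ^ (j : ℕ) *ᵥ 1) i with hW
  have hg : (W a)ᵀ * W a = (W b)ᵀ * W b := by
    ext j k
    change (a ^ (j : ℕ) *ᵥ 1) ⬝ᵥ (a ^ (k : ℕ) *ᵥ 1) = (b ^ (j : ℕ) *ᵥ 1) ⬝ᵥ (b ^ (k : ℕ) *ᵥ 1)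
    rw [walk_dot_walk ha, walk_dot_walk hb, hw]
  have hda : (W a).det = 0 := by
    refine exists_vecMul_eq_zero_iff.mp ⟨x, hx0, ?_⟩
    funext j
    exact hx j (by omega)
  have hdb : (W b).det = 0 := by
    have h1 := congrArg Matrix.det hg
    simp only [det_mul, det_transpose, hda, mul_zero] at h1
    exact mul_self_eq_zero.mp h1.symm
  obtain ⟨y, hy0, hy⟩ := exists_vecMul_eq_zero_iff.mpr hdb
  exact ⟨y, fun k hk => congrFun hy ⟨k, by omega⟩, hy0⟩

/-- an almost controllable graph with a pair of twins is DGS iff every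
rational regular orthogonal `Q` with `QᵀA(G)Q` an adjacency matrix is a permutation
matrix. -/
theorem isDGS_iff_forall_perm
    (n : ℕ) (A : Matrix (Fin (n + 2)) (Fin (n + 2)) ℤ)
    (hA : A.IsAdjMatrix) (hac : IsAlmostControllable A)
    (τ τ' : Fin (n + 2)) (hne : τ ≠ τ') (htw : IsTwinPair A τ τ') :
    IsDGS A ↔
      ∀ Q : Matrix (Fin (n + 2)) (Fin (n + 2)) ℚ, IsRegularOrthogonal Q →
        (Qᵀ * A.map ((↑) : ℤ → ℚ) * Q).IsAdjMatrix → IsPermMatrix Q := by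
  rw [IsAlmostControllable, walkMatrix_map] at hac
  have has := map_isSymm hA.symm
  set a := A.map ((↑) : ℤ → ℚ) with ha
  obtain ⟨hsw, hperp⟩ := twin_facts (a := a) (τ := τ) (τ' := τ') fun i j => by
    rw [ha, map_apply, map_apply, htw i j]
  set x : Fin (n + 2) → ℚ := Pi.single τ' 1 - Pi.single τ 1 with hx
  have hx0 : x ≠ 0 := fun h => by
    have := congrFun h τ
    simp [hx, hne] at this
  have hdet := extMat_det_ne_zero a x hac hx0 hperp
  constructor
  · rintro hD Q ⟨hQ, hQ1⟩ hB
    change Q *ᵥ 1 = 1 at hQ1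
    obtain ⟨B, hBadj, hBeq⟩ := exists_int_adj hB
    obtain ⟨σ, hσ⟩ := hD B hBadj
      (genCospectral_of_conj hA.apply_diag hBadj.apply_diag hQ hQ1 hBeq)
    set P := σ.permMatrix ℚ with hP
    have hPP : Pᵀ * P = 1 := permMatrix_transpose_mul σ
    have hP1 : P *ᵥ 1 = 1 := by rw [hP, permMatrix_mulVec]; rfl
    have hconj : Qᵀ * a * Q = P * a * Pᵀ := by
      rw [hBeq, hP, permMatrix_conj]
      ext i j
      simp [ha, hσ]
    have hRR : (Q * P)ᵀ * (Q * P) = 1 := by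
      rw [transpose_mul, Matrix.mul_assoc, ← Matrix.mul_assoc Qᵀ, hQ, one_mul, hPP]
    have hR1 : (Q * P) *ᵥ 1 = 1 := by rw [← mulVec_mulVec, hP1, hQ1]
    have hR : (Q * P) * a = a * (Q * P) := by
      have hQP : Q * (P * a * Pᵀ) * P = Q * P * a := by
        simp only [Matrix.mul_assoc, hPP, mul_one]
      rw [← hQP, ← hconj]
      simp only [← Matrix.mul_assoc]
      rw [mul_eq_one_comm.mp hQ, one_mul]
    have hQeq : Q = Q * P * Pᵀ := by
      rw [Matrix.mul_assoc, mul_eq_one_comm.mp hPP, mul_one]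
    -- `Q * P` is the identity if it fixes `x`, and the transposition of the twins if it negates `x`.
    rcases mulVec_perp_eq hperp hdet hRR hR hR1 with h | h
    · have h1 : Q * P = 1 := extMat_cancel hdet hR hR1 (by rw [one_mul, mul_one])
        (one_mulVec _) (by rw [h, one_mulVec])
      rw [hQeq, h1, one_mul, hP, transpose_permMatrix]
      exact isPermMatrix_permMatrix _
    · have h1 : Q * P = (Equiv.swap τ τ').permMatrix ℚ := by
        refine extMat_cancel hdet hR hR1 hsw (by rw [permMatrix_mulVec]; rfl) ?_
        rw [h, permMatrix_mulVec, hx]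
        funext i
        have e1 : (Equiv.swap τ τ' i = τ') ↔ i = τ := by
          rw [Equiv.swap_apply_eq_iff, Equiv.swap_apply_right]
        have e2 : (Equiv.swap τ τ' i = τ) ↔ i = τ' := by
          rw [Equiv.swap_apply_eq_iff, Equiv.swap_apply_left]
        simp [Pi.single_apply, e1, e2]
      rw [hQeq, h1, hP, transpose_permMatrix, ← permMatrix_mul]
      exact isPermMatrix_permMatrix _
  · intro hQ B hB ⟨hc1, hc2⟩
    have hbs := map_isSymm hB.symm
    have hw := walk_count_eq a (B.map ((↑) : ℤ → ℚ)) has hbs ((charpoly_map_eq_iff _ _).mpr hc1)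
      (charpoly_sub_ones hA.apply_diag hB.apply_diag hc2)
    obtain ⟨y, hy, hy0⟩ := exists_walkPerp has hbs hw hperp hx0
    obtain ⟨Q, hQQ, hQ1, hQa⟩ := exists_regular_orthogonal has hbs
      (by simp [Matrix.trace, ha, hA.apply_diag, hB.apply_diag]) hw hperp hdet hy hy0
    obtain ⟨σ, hσ⟩ := hQ Q ⟨hQQ, hQ1⟩ (by
      rw [hQa]
      exact ⟨fun i j => by rcases hB.zero_or_one i j with h | h <;> simp [h], hbs,
        fun i => by simp [hB.apply_diag]⟩)
    have hQσ : Q = σ.permMatrix ℚ := by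
      ext i j; rw [hσ, permMatrix_apply_eq]
    refine ⟨σ⁻¹, fun i j => ?_⟩
    have h1 := permMatrix_conj σ⁻¹ a
    rw [← transpose_permMatrix, transpose_transpose, ← hQσ, hQa] at h1
    have h2 := congrFun (congrFun h1 i) j
    simpa [ha] using h2

end AlmostControllableGraphs
end
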